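/- arXiv:1909.05850 — 2 statements merged into one kernel-verified Lean document; each statement's English description precedes it below -/
import Mathlib

section
/- (Quantitative doubly robust bias bound.) Assume η ≤ C_η and that μ_b.bind K_b is absolutely continuous with respect to μ_b with density bounded by C_{S'}. Then for all bounded measurable w' : S → ℝ and q' : S × A → ℝ, | E_D[ψ(s,a,r,s'; w', q')] − ρ | ≤ (1 + γ·√(C_η · C_{S'})) · ‖w' − w‖_{L²(μ_b)} · ‖q' − q‖_{L²(ν_e)}, where ν_e denotes the law of (s,a) with s ~ μ_b and a ~ π_e(s), and ‖·‖_{L²} denotes the corresponding L² norms. -/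
open MeasureTheory ProbabilityTheory
open scoped ENNReal

noncomputable section

variable {S A : Type*} [MeasurableSpace S] [MeasurableSpace A]

/-- `t`-fold composition of a Markov kernel with itself. -/
def kpow {α : Type*} [MeasurableSpace α] (K : Kernel α α) : ℕ → Kernel α α
  | 0 => Kernel.id
  | n + 1 => K ∘ₖ kpow K n

/-- The state-transition kernel induced by a policy `π`. -/
def stateKernel (P : Kernel (S × A) S) (π : Kernel S A) [IsSFiniteKernel π] :
    Kernel S S :=
  P ∘ₖ (Kernel.id ×ₖ π)

/-- The discounted average visitation measure. -/
def dgamma (γ : ℝ) (μe : Measure S) (Ke : Kernel S S) : Measure S :=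
  ENNReal.ofReal (1 - γ) •
    Measure.sum fun t : ℕ => ENNReal.ofReal γ ^ t • μe.bind fun s => kpow Ke t s

/-- The data distribution `D`. -/
def dataLaw (P : Kernel (S × A) S) (R : Kernel (S × A) ℝ) (πb : Kernel S A)
    (μb : Measure S) : Measure (S × A × ℝ × S) :=
  μb.bind fun s => (πb s).bind fun a => (R (s, a)).bind fun r =>
    (P (s, a)).map fun s' => (s, a, r, s')

/-- The DRL estimating function `ψ(s,a,r,s'; w', q')`. -/
def psiDRL (γ : ℝ) (μe : Measure S) (πe : Kernel S A) (η : S → A → ℝ)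
    (w' : S → ℝ) (q' : S → A → ℝ) (x : S × A × ℝ × S) : ℝ :=
  (1 - γ) * (∫ s, (∫ a, q' s a ∂(πe s)) ∂μe) +
    w' x.1 * η x.1 x.2.1 *
      (x.2.2.1 + γ * (∫ a, q' x.2.2.2 a ∂(πe x.2.2.2)) - q' x.1 x.2.1)

/-!
Write `δ = v' - v` for the error of the candidate state values and `K` for the target transition
kernel. The policy ratio `η` turns the data distribution of the behavior policy into that of the
target policy, and the temporal-difference error of the true `q` has conditional mean zero given
`(s, a)`. Hence `E_D[ψ] = (1 - γ) ∫ v' dμ_e + ∫ w' (γ K δ - δ) dμ_b`.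

The visitation measure satisfies the balance equation `d_γ = (1 - γ) μ_e + γ d_γ K`, so
`∫ w (δ - γ K δ) dμ_b = (1 - γ) ∫ δ dμ_e`. The bias is therefore exactly
`∫ (w' - w) (γ K δ - δ) dμ_b`, a product of the two errors. Cauchy–Schwarz bounds it, since `K` has
norm at most `√(C_η C_{S'})` on `L²(μ_b)` (Jensen together with `μ_b K ≤ C_η C_{S'} μ_b`), and
`‖δ‖ ≤ ‖q' - q‖` by Jensen again.
-/

section Bounded

variable {α β : Type*} [MeasurableSpace α] [MeasurableSpace β]

lemma memLp_of_exists_bound {μ : Measure α} [IsFiniteMeasure μ] {f : α → ℝ} (hf : Measurable f)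
    (hf_bdd : ∃ C, ∀ x, |f x| ≤ C) (p : ℝ≥0∞) : MemLp f p μ := by
  obtain ⟨C, hC⟩ := hf_bdd
  exact .of_bound hf.aestronglyMeasurable C (ae_of_all _ hC)

lemma memLp_of_nonneg_of_exists_bound {μ : Measure α} [IsFiniteMeasure μ] {f : α → ℝ}
    (hf : Measurable f) (hf_bdd : ∃ C, ∀ x, 0 ≤ f x ∧ f x ≤ C) (p : ℝ≥0∞) : MemLp f p μ :=
  memLp_of_exists_bound hf
    (hf_bdd.imp fun _ hC x ↦ (abs_of_nonneg (hC x).1).trans_le (hC x).2) p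

lemma memLp_uncurry_of_exists_bound {μ : Measure (α × β)} [IsFiniteMeasure μ] {f : α → β → ℝ}
    (hf : Measurable (Function.uncurry f)) (hf_bdd : ∃ C, ∀ x y, |f x y| ≤ C) (p : ℝ≥0∞) :
    MemLp (Function.uncurry f) p μ :=
  memLp_of_exists_bound hf (hf_bdd.imp fun _ hC z ↦ hC z.1 z.2) p

end Bounded

section Kernel

variable {α β E : Type*} [MeasurableSpace α] [MeasurableSpace β]
  [NormedAddCommGroup E] [NormedSpace ℝ E]

lemma eLpNorm_integral_compProd_le {μ : Measure α} [SFinite μ] {κ : Kernel α β}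
    [IsMarkovKernel κ] {f : α × β → E} {p : ℝ≥0∞} (hp : 1 ≤ p) (hp_top : p ≠ ∞)
    (hf : AEStronglyMeasurable f (μ ⊗ₘ κ)) :
    eLpNorm (fun x ↦ ∫ y, f (x, y) ∂κ x) p μ ≤ eLpNorm f p (μ ⊗ₘ κ) := by
  have hp_zero : p ≠ 0 := (zero_lt_one.trans_le hp).ne'
  have hp_pos : 0 < p.toReal := ENNReal.toReal_pos hp_zero hp_top
  have jensen : ∀ᵐ x ∂μ, ‖∫ y, f (x, y) ∂κ x‖ₑ ^ p.toReal ≤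
      ∫⁻ y, ‖f (x, y)‖ₑ ^ p.toReal ∂κ x := by
    filter_upwards [AEStronglyMeasurable.ae_of_compProd (f := fun x y ↦ f (x, y)) hf] with x hx
    calc ‖∫ y, f (x, y) ∂κ x‖ₑ ^ p.toReal
        ≤ eLpNorm (fun y ↦ f (x, y)) 1 (κ x) ^ p.toReal := by
          rw [eLpNorm_one_eq_lintegral_enorm]
          gcongr
          exact enorm_integral_le_lintegral_enorm _
      _ ≤ eLpNorm (fun y ↦ f (x, y)) p (κ x) ^ p.toReal := by
          gcongr
          exact eLpNorm_le_eLpNorm_of_exponent_le hp hx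
      _ = ∫⁻ y, ‖f (x, y)‖ₑ ^ p.toReal ∂κ x := by
          rw [eLpNorm_eq_lintegral_rpow_enorm_toReal hp_zero hp_top, one_div,
            ENNReal.rpow_inv_rpow hp_pos.ne']
  have disintegrate : ∫⁻ z, ‖f z‖ₑ ^ p.toReal ∂(μ ⊗ₘ κ) =
      ∫⁻ x, ∫⁻ y, ‖f (x, y)‖ₑ ^ p.toReal ∂κ x ∂μ :=
    Kernel.lintegral_compProd₀ (Kernel.const Unit μ) (Kernel.prodMkLeft Unit κ) ()
      (hf.enorm.pow_const _)
  rw [eLpNorm_eq_lintegral_rpow_enorm_toReal hp_zero hp_top,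
    eLpNorm_eq_lintegral_rpow_enorm_toReal hp_zero hp_top, disintegrate]
  gcongr ?_ ^ _
  exact lintegral_mono_ae jensen

lemma memLp_integral_compProd {μ : Measure α} [SFinite μ] {κ : Kernel α β}
    [IsMarkovKernel κ] {f : α × β → E} {p : ℝ≥0∞} (hp : 1 ≤ p) (hp_top : p ≠ ∞)
    (hf : MemLp f p (μ ⊗ₘ κ)) :
    MemLp (fun x ↦ ∫ y, f (x, y) ∂κ x) p μ :=
  ⟨AEStronglyMeasurable.integral_kernel_compProd (a := ()) (κ := Kernel.const Unit μ)
      (η := Kernel.prodMkLeft Unit κ) hf.1,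
    (eLpNorm_integral_compProd_le hp hp_top hf.1).trans_lt hf.2⟩

lemma measurePreserving_snd_compProd (μ : Measure α) [SFinite μ] (κ : Kernel α β)
    [IsSFiniteKernel κ] : MeasurePreserving Prod.snd (μ ⊗ₘ κ) (κ ∘ₘ μ) :=
  ⟨measurable_snd, Measure.snd_compProd μ κ⟩

lemma measurePreserving_fst_compProd (μ : Measure α) [SFinite μ] (κ : Kernel α β)
    [IsMarkovKernel κ] : MeasurePreserving Prod.fst (μ ⊗ₘ κ) μ :=
  ⟨measurable_fst, Measure.fst_compProd μ κ⟩

lemma memLp_integral_comp {μ : Measure α} [SFinite μ] {κ : Kernel α β}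
    [IsMarkovKernel κ] {g : β → E} {p : ℝ≥0∞} (hp : 1 ≤ p) (hp_top : p ≠ ∞)
    (hg : MemLp g p (κ ∘ₘ μ)) :
    MemLp (fun x ↦ ∫ y, g y ∂κ x) p μ :=
  memLp_integral_compProd hp hp_top
    (hg.comp_measurePreserving (measurePreserving_snd_compProd μ κ))

lemma eLpNorm_integral_comp_le {μ : Measure α} [SFinite μ] {κ : Kernel α β}
    [IsMarkovKernel κ] {g : β → E} {p : ℝ≥0∞} (hp : 1 ≤ p) (hp_top : p ≠ ∞)
    (hg : AEStronglyMeasurable g (κ ∘ₘ μ)) :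
    eLpNorm (fun x ↦ ∫ y, g y ∂κ x) p μ ≤ eLpNorm g p (κ ∘ₘ μ) := by
  have h_snd := measurePreserving_snd_compProd μ κ
  calc eLpNorm (fun x ↦ ∫ y, g y ∂κ x) p μ
      ≤ eLpNorm (g ∘ Prod.snd) p (μ ⊗ₘ κ) :=
        eLpNorm_integral_compProd_le (f := g ∘ Prod.snd) hp hp_top
          (hg.comp_measurePreserving h_snd)
    _ = eLpNorm g p (κ ∘ₘ μ) := eLpNorm_comp_measurePreserving hg h_snd

lemma integral_comp_eq_integral_integral {μ : Measure α} [SFinite μ] {κ : Kernel α β}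
    [IsSFiniteKernel κ] {g : β → E} (hg : Integrable g (κ ∘ₘ μ)) :
    ∫ y, g y ∂(κ ∘ₘ μ) = ∫ x, ∫ y, g y ∂κ x ∂μ := by
  calc ∫ y, g y ∂(κ ∘ₘ μ) = ∫ z, g z.2 ∂(μ ⊗ₘ κ) := by
        rw [← Measure.snd_compProd] at hg ⊢
        exact integral_map measurable_snd.aemeasurable hg.1
    _ = ∫ x, ∫ y, g y ∂κ x ∂μ :=
        Measure.integral_compProd ((Measure.integrable_compProd_snd_iff hg.1).2 hg)

lemma integral_compProd_fst_mul {μ : Measure α} [SFinite μ] {κ : Kernel α β}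
    [IsSFiniteKernel κ] {f : α → ℝ} {g : α × β → ℝ}
    (hfg : Integrable (fun z ↦ f z.1 * g z) (μ ⊗ₘ κ)) :
    ∫ z, f z.1 * g z ∂(μ ⊗ₘ κ) = ∫ x, f x * ∫ y, g (x, y) ∂κ x ∂μ := by
  rw [Measure.integral_compProd hfg]
  simp only [integral_const_mul]

lemma comp_mono_measure {μ ν : Measure α} (h : μ ≤ ν) (κ : Kernel α β) :
    κ ∘ₘ μ ≤ κ ∘ₘ ν := by
  refine Measure.le_iff.2 fun s hs ↦ ?_
  rw [Measure.bind_apply hs κ.aemeasurable, Measure.bind_apply hs κ.aemeasurable]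
  exact lintegral_mono' h le_rfl

lemma le_smul_of_rnDeriv_le {μ ν : Measure α} [μ.HaveLebesgueDecomposition ν] (h_ac : μ ≪ ν)
    {c : ℝ≥0∞} (hc : ∀ᵐ x ∂ν, μ.rnDeriv ν x ≤ c) : μ ≤ c • ν := by
  rw [← Measure.withDensity_rnDeriv_eq μ ν h_ac, ← withDensity_const]
  exact withDensity_mono hc

lemma withDensity_le_smul {μ : Measure α} {f : α → ℝ≥0∞} {c : ℝ≥0∞}
    (hc : ∀ᵐ x ∂μ, f x ≤ c) : μ.withDensity f ≤ c • μ := by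
  rw [← withDensity_const]
  exact withDensity_mono hc

lemma compProd_eq_withDensity {μ : Measure α} [SFinite μ] {κ κ' : Kernel α β}
    [IsSFiniteKernel κ] [IsSFiniteKernel κ'] {f : α → β → ℝ≥0∞}
    (hf : Measurable (Function.uncurry f)) (hf_top : ∀ x y, f x y ≠ ∞)
    (h : ∀ᵐ x ∂μ, κ' x = (κ x).withDensity (f x)) :
    μ ⊗ₘ κ' = (μ ⊗ₘ κ).withDensity fun z ↦ f z.1 z.2 := by
  have := Kernel.IsSFiniteKernel.withDensity κ hf_top
  rw [← Measure.compProd_withDensity hf]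
  refine Measure.compProd_congr ?_
  filter_upwards [h] with x hx
  rw [hx, Kernel.withDensity_apply κ hf]

lemma withDensity_compProd {μ : Measure α} [SFinite μ] {κ : Kernel α β} [IsSFiniteKernel κ]
    {f : α → ℝ≥0∞} (hf : Measurable f) :
    μ.withDensity f ⊗ₘ κ = (μ ⊗ₘ κ).withDensity (f ∘ Prod.fst) := by
  refine Measure.ext_of_lintegral _ fun g hg ↦ ?_
  rw [Measure.lintegral_compProd hg, lintegral_withDensity_eq_lintegral_mul _ hf (by fun_prop),
    lintegral_withDensity_eq_lintegral_mul _ (by fun_prop) hg,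
    Measure.lintegral_compProd (by fun_prop)]
  refine lintegral_congr fun x ↦ ?_
  simp only [Pi.mul_apply, Function.comp_apply]
  rw [lintegral_const_mul _ (by fun_prop)]

lemma map_withDensity_comp {μ : Measure α} {T : α → β} (hT : Measurable T) {f : β → ℝ≥0∞}
    (hf : Measurable f) : (μ.withDensity (f ∘ T)).map T = (μ.map T).withDensity f := by
  ext s hs
  rw [Measure.map_apply hT hs, withDensity_apply _ (hT hs), withDensity_apply _ hs,
    setLIntegral_map hs hf hT]
  rfl

lemma integral_comp_of_measurePreserving {μ : Measure α} {ν : Measure β} {T : α → β}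
    (hT : MeasurePreserving T μ ν) {g : β → E} (hg : AEStronglyMeasurable g ν) :
    ∫ x, g (T x) ∂μ = ∫ y, g y ∂ν := by
  rw [← hT.map_eq] at hg ⊢
  exact (integral_map hT.aemeasurable hg).symm

end Kernel

section CauchySchwarz

variable {α : Type*} [MeasurableSpace α] {μ : Measure α}

lemma abs_integral_mul_le_lpNorm_mul_lpNorm {f g : α → ℝ} (hf : MemLp f 2 μ)
    (hg : MemLp g 2 μ) : |∫ x, f x * g x ∂μ| ≤ lpNorm f 2 μ * lpNorm g 2 μ := by
  calc |∫ x, f x * g x ∂μ| ≤ ∫ x, ‖f x‖ * ‖g x‖ ∂μ := by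
        simpa only [norm_mul, Real.norm_eq_abs] using
          norm_integral_le_integral_norm (μ := μ) fun x ↦ f x * g x
    _ ≤ lpNorm f 2 μ * lpNorm g 2 μ := by
        rw [lpNorm_eq_integral_norm_rpow_toReal two_ne_zero ENNReal.ofNat_ne_top hf.1,
          lpNorm_eq_integral_norm_rpow_toReal two_ne_zero ENNReal.ofNat_ne_top hg.1]
        simpa only [one_div, ENNReal.toReal_ofNat] using
          integral_mul_norm_le_Lp_mul_Lq Real.HolderConjugate.two_two
            (by simpa using hf) (by simpa using hg)

lemma lpNorm_two_eq_sqrt_integral_sq {f : α → ℝ} (hf : AEStronglyMeasurable f μ) :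
    lpNorm f 2 μ = √(∫ x, f x ^ 2 ∂μ) := by
  rw [lpNorm_eq_integral_norm_rpow_toReal two_ne_zero ENNReal.ofNat_ne_top hf,
    Real.sqrt_eq_rpow]
  simp

lemma lpNorm_two_integral_comp_le {β E : Type*} [MeasurableSpace β] [NormedAddCommGroup E]
    [NormedSpace ℝ E] [SFinite μ] {ν : Measure β} {κ : Kernel α β} [IsMarkovKernel κ] {c : ℝ}
    (hκ : κ ∘ₘ μ ≤ ENNReal.ofReal c • ν) {g : β → E} (hg : MemLp g 2 ν) :
    lpNorm (fun x ↦ ∫ y, g y ∂κ x) 2 μ ≤ √c * lpNorm g 2 ν := by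
  have hg_comp : MemLp g 2 (κ ∘ₘ μ) := hg.of_measure_le_smul ENNReal.ofReal_ne_top hκ
  have h_memLp := memLp_integral_comp one_le_two ENNReal.ofNat_ne_top hg_comp
  have h_eLpNorm : eLpNorm (fun x ↦ ∫ y, g y ∂κ x) 2 μ ≤
      ENNReal.ofReal (√c) * eLpNorm g 2 ν := by
    calc eLpNorm (fun x ↦ ∫ y, g y ∂κ x) 2 μ ≤ eLpNorm g 2 (κ ∘ₘ μ) :=
          eLpNorm_integral_comp_le one_le_two ENNReal.ofNat_ne_top hg_comp.1
      _ ≤ ENNReal.ofReal c ^ (1 / (2 : ℝ≥0∞)).toReal * eLpNorm g 2 ν :=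
          eLpNorm_le_of_measure_le_smul hκ
      _ = ENNReal.ofReal (√c) * eLpNorm g 2 ν := by
          congr 1
          rw [Real.sqrt, ENNReal.ofReal_coe_nnreal, NNReal.sqrt_eq_rpow, ENNReal.ofReal,
            ENNReal.coe_rpow_of_nonneg _ (by norm_num)]
          norm_num
  rw [← ofReal_lpNorm h_memLp, ← ofReal_lpNorm hg, ← ENNReal.ofReal_mul (Real.sqrt_nonneg c)]
    at h_eLpNorm
  exact (ENNReal.ofReal_le_ofReal_iff
    (mul_nonneg (Real.sqrt_nonneg c) lpNorm_nonneg)).1 h_eLpNorm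

lemma abs_integral_mul_discounted_sub_le {κ : Kernel α α} [IsMarkovKernel κ] [SFinite μ] {γ c : ℝ}
    (hγ : 0 ≤ γ) (hκ : κ ∘ₘ μ ≤ ENNReal.ofReal c • μ) {f g : α → ℝ} (hf : MemLp f 2 μ)
    (hg : MemLp g 2 μ) :
    |γ * ∫ x, f x * ∫ y, g y ∂κ x ∂μ - ∫ x, f x * g x ∂μ| ≤
      (1 + γ * √c) * lpNorm f 2 μ * lpNorm g 2 μ := by
  have h_next : MemLp (fun x ↦ ∫ y, g y ∂κ x) 2 μ := memLp_integral_comp one_le_two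
    ENNReal.ofNat_ne_top (hg.of_measure_le_smul ENNReal.ofReal_ne_top hκ)
  calc |γ * ∫ x, f x * ∫ y, g y ∂κ x ∂μ - ∫ x, f x * g x ∂μ|
      ≤ γ * |∫ x, f x * ∫ y, g y ∂κ x ∂μ| + |∫ x, f x * g x ∂μ| := by
        simpa only [abs_mul, abs_of_nonneg hγ] using
          abs_sub (γ * ∫ x, f x * ∫ y, g y ∂κ x ∂μ) (∫ x, f x * g x ∂μ)
    _ ≤ γ * (lpNorm f 2 μ * lpNorm (fun x ↦ ∫ y, g y ∂κ x) 2 μ) +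
          lpNorm f 2 μ * lpNorm g 2 μ := by
        gcongr
        · exact abs_integral_mul_le_lpNorm_mul_lpNorm hf h_next
        · exact abs_integral_mul_le_lpNorm_mul_lpNorm hf hg
    _ ≤ γ * (lpNorm f 2 μ * (√c * lpNorm g 2 μ)) + lpNorm f 2 μ * lpNorm g 2 μ := by
        gcongr
        · exact lpNorm_nonneg
        · exact lpNorm_two_integral_comp_le hκ hg
    _ = (1 + γ * √c) * lpNorm f 2 μ * lpNorm g 2 μ := by ring

lemma integral_sub_mul_of_memLp_two {f f' g : α → ℝ} (hf : MemLp f 2 μ) (hf' : MemLp f' 2 μ)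
    (hg : MemLp g 2 μ) :
    ∫ x, (f - f') x * g x ∂μ = ∫ x, f x * g x ∂μ - ∫ x, f' x * g x ∂μ := by
  rw [← integral_sub (f := fun x ↦ f x * g x) (g := fun x ↦ f' x * g x)
    (hf.integrable_mul hg) (hf'.integrable_mul hg)]
  simp only [Pi.sub_apply, sub_mul]

end CauchySchwarz

section Density

variable {α : Type*} [MeasurableSpace α] {μ : Measure α} {w g : α → ℝ}

lemma integral_withDensity_ofReal (hw : AEMeasurable w μ) (hw_nonneg : 0 ≤ᵐ[μ] w) :
    ∫ x, g x ∂μ.withDensity (fun x ↦ ENNReal.ofReal (w x)) = ∫ x, w x * g x ∂μ := by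
  rw [integral_withDensity_eq_integral_toReal_smul₀ hw.ennreal_ofReal
    (ae_of_all _ fun _ ↦ ENNReal.ofReal_lt_top)]
  refine integral_congr_ae ?_
  filter_upwards [hw_nonneg] with x hx
  rw [ENNReal.toReal_ofReal hx, smul_eq_mul]

lemma integrable_withDensity_ofReal_iff (hw : AEMeasurable w μ) (hw_nonneg : 0 ≤ᵐ[μ] w) :
    Integrable g (μ.withDensity fun x ↦ ENNReal.ofReal (w x)) ↔
      Integrable (fun x ↦ w x * g x) μ := by
  rw [integrable_withDensity_iff_integrable_smul₀' hw.ennreal_ofReal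
    (ae_of_all _ fun _ ↦ ENNReal.ofReal_lt_top)]
  refine integrable_congr ?_
  filter_upwards [hw_nonneg] with x hx
  rw [ENNReal.toReal_ofReal hx, smul_eq_mul]

end Density

section ProdMeasure

variable {α β γ : Type*} [MeasurableSpace α] [MeasurableSpace β] [MeasurableSpace γ]

lemma comp_id_prod_apply (κ : Kernel (α × β) γ) (π : Kernel α β) [IsSFiniteKernel π] (x : α) :
    (κ ∘ₖ (Kernel.id ×ₖ π)) x = (π x).bind fun y ↦ κ (x, y) := by
  rw [Kernel.comp_apply, Kernel.prod_apply, Kernel.id_apply, Measure.dirac_prod, Measure.bind,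
    Measure.bind, Measure.map_map κ.measurable measurable_prodMk_left]
  rfl

lemma map_prod_eq_bind_map {μ : Measure α} {ν : Measure β} [SFinite ν] {f : α × β → γ}
    (hf : Measurable f) :
    (μ.prod ν).map f = μ.bind fun x ↦ ν.map fun y ↦ f (x, y) := by
  have map_apply {s : Set γ} (hs : MeasurableSet s) (x : α) :
      (ν.map fun y ↦ f (x, y)) s = ν (Prod.mk x ⁻¹' (f ⁻¹' s)) :=
    Measure.map_apply (by fun_prop) hs
  have h_meas : Measurable fun x ↦ ν.map fun y ↦ f (x, y) := by
    refine Measure.measurable_of_measurable_coe _ fun s hs ↦ ?_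
    simp only [map_apply hs]
    exact measurable_measure_prodMk_left (hf hs)
  ext s hs
  simp only [Measure.map_apply hf hs, Measure.prod_apply (hf hs),
    Measure.bind_apply hs h_meas.aemeasurable, map_apply hs]

lemma map_compProd_compProd_eq_compProd_comp (μ : Measure α) [SFinite μ] (κ : Kernel α β)
    [IsSFiniteKernel κ] (κ' : Kernel (α × β) γ) [IsSFiniteKernel κ'] :
    (μ ⊗ₘ κ ⊗ₘ κ').map (fun z ↦ (z.1.1, z.2)) = μ ⊗ₘ (κ' ∘ₖ (Kernel.id ×ₖ κ)) := by
  refine Measure.ext_of_lintegral _ fun f hf ↦ ?_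
  rw [lintegral_map hf (by fun_prop), Measure.lintegral_compProd (by fun_prop),
    Measure.lintegral_compProd, Measure.lintegral_compProd hf]
  · refine lintegral_congr fun x ↦ ?_
    have h_meas : Measurable fun y ↦ κ' (x, y) := κ'.measurable.comp measurable_prodMk_left
    rw [comp_id_prod_apply, Measure.lintegral_bind h_meas.aemeasurable (by fun_prop)]
  · fun_prop

end ProdMeasure

section VisitationMeasure

variable {γ : ℝ} {μ : Measure S} {K : Kernel S S} {E : Type*} [NormedAddCommGroup E] {g : S → E}

lemma dgamma_eq_add_comp (γ : ℝ) (μ : Measure S) (K : Kernel S S) :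
    dgamma γ μ K = ENNReal.ofReal (1 - γ) • μ + ENNReal.ofReal γ • (K ∘ₘ dgamma γ μ K) := by
  have start : kpow K 0 ∘ₘ μ = μ := by
    simp only [kpow, Measure.id_comp]
  have step (t : ℕ) : K ∘ₘ (kpow K t ∘ₘ μ) = kpow K (t + 1) ∘ₘ μ := Measure.comp_assoc
  have pushforward : K ∘ₘ dgamma γ μ K = ENNReal.ofReal (1 - γ) •
      Measure.sum fun t : ℕ ↦ ENNReal.ofReal γ ^ t • (kpow K (t + 1) ∘ₘ μ) := by
    simp only [dgamma, Measure.bind_smul, Measure.bind_sum _ _ K.measurable.aemeasurable, step]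
  rw [pushforward]
  ext s hs
  simp only [dgamma, Measure.add_apply, Measure.smul_apply, Measure.sum_apply _ hs, smul_eq_mul]
  rw [tsum_eq_zero_add' ENNReal.summable, start, mul_add, pow_zero, one_mul,
    ← ENNReal.tsum_mul_left, ← ENNReal.tsum_mul_left, ← ENNReal.tsum_mul_left]
  congr 1
  refine tsum_congr fun t ↦ ?_
  ring

instance isSFiniteKernel_kpow [IsSFiniteKernel K] (t : ℕ) : IsSFiniteKernel (kpow K t) := by
  induction t with
  | zero => exact inferInstanceAs (IsSFiniteKernel Kernel.id)
  | succ t ih => exact inferInstanceAs (IsSFiniteKernel (K ∘ₖ kpow K t))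

instance sFinite_dgamma [SFinite μ] [IsSFiniteKernel K] : SFinite (dgamma γ μ K) := by
  unfold dgamma
  infer_instance

lemma integrable_of_integrable_dgamma (hγ : γ < 1) (hg : Integrable g (dgamma γ μ K)) :
    Integrable g μ := by
  rw [dgamma_eq_add_comp] at hg
  exact (integrable_smul_measure (ENNReal.ofReal_pos.2 (sub_pos.2 hγ)).ne'
    ENNReal.ofReal_ne_top).1 hg.left_of_add_measure

lemma integrable_comp_dgamma (hγ : 0 < γ) (hg : Integrable g (dgamma γ μ K)) :
    Integrable g (K ∘ₘ dgamma γ μ K) := by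
  rw [dgamma_eq_add_comp] at hg
  exact (integrable_smul_measure (ENNReal.ofReal_pos.2 hγ).ne'
    ENNReal.ofReal_ne_top).1 hg.right_of_add_measure

lemma integral_dgamma [NormedSpace ℝ E] [SFinite μ] [IsSFiniteKernel K] (hγ : γ ∈ Set.Ioo 0 1)
    (hg : Integrable g (dgamma γ μ K)) :
    ∫ s, g s ∂dgamma γ μ K =
      (1 - γ) • ∫ s, g s ∂μ + γ • ∫ s, ∫ s', g s' ∂K s ∂dgamma γ μ K := by
  have int_start := integrable_of_integrable_dgamma hγ.2 hg
  have int_next := integrable_comp_dgamma hγ.1 hg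
  conv_lhs => rw [dgamma_eq_add_comp]
  rw [integral_add_measure (int_start.smul_measure ENNReal.ofReal_ne_top)
      (int_next.smul_measure ENNReal.ofReal_ne_top),
    integral_smul_measure, integral_smul_measure, ENNReal.toReal_ofReal (sub_nonneg.2 hγ.2.le),
    ENNReal.toReal_ofReal hγ.1.le, integral_comp_eq_integral_integral int_next]

lemma integral_mul_of_dgamma_eq_withDensity [SFinite μ] [IsSFiniteKernel K] (hγ : γ ∈ Set.Ioo 0 1)
    {ν : Measure S} {w g : S → ℝ} (hw_meas : AEMeasurable w ν) (hw_nonneg : 0 ≤ᵐ[ν] w)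
    (hw : dgamma γ μ K = ν.withDensity fun s ↦ ENNReal.ofReal (w s))
    (hg : Integrable g (dgamma γ μ K)) :
    ∫ s, w s * g s ∂ν = (1 - γ) * ∫ s, g s ∂μ + γ * ∫ s, w s * ∫ s', g s' ∂K s ∂ν := by
  have balance := integral_dgamma hγ hg
  rwa [hw, integral_withDensity_ofReal hw_meas hw_nonneg,
    integral_withDensity_ofReal hw_meas hw_nonneg] at balance

end VisitationMeasure

section MarkovDecisionProcess

variable {P : Kernel (S × A) S} {R : Kernel (S × A) ℝ} {π : Kernel S A} {μ : Measure S}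

instance [IsMarkovKernel P] [IsMarkovKernel π] : IsMarkovKernel (stateKernel P π) := by
  unfold stateKernel
  infer_instance

lemma stateKernel_comp [IsSFiniteKernel π] [SFinite μ] :
    stateKernel P π ∘ₘ μ = P ∘ₘ (μ ⊗ₘ π) := by
  rw [stateKernel, ← Measure.comp_assoc, Measure.compProd_eq_comp_prod]

lemma stateKernel_comp_le_smul {πe πb : Kernel S A} [IsSFiniteKernel πe] [IsSFiniteKernel πb]
    [SFinite μ] {c c' : ℝ≥0∞} (h_policy : μ ⊗ₘ πe ≤ c • (μ ⊗ₘ πb))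
    (h_next : stateKernel P πb ∘ₘ μ ≤ c' • μ) :
    stateKernel P πe ∘ₘ μ ≤ (c * c') • μ := by
  calc stateKernel P πe ∘ₘ μ = P ∘ₘ (μ ⊗ₘ πe) := stateKernel_comp
    _ ≤ P ∘ₘ (c • (μ ⊗ₘ πb)) := comp_mono_measure h_policy P
    _ = c • (stateKernel P πb ∘ₘ μ) := by rw [Measure.comp_smul, stateKernel_comp]
    _ ≤ c • c' • μ := by gcongr
    _ = (c * c') • μ := smul_smul c c' μ

lemma stateKernel_comp_le_of_density_le [SFinite μ] {πe πb : Kernel S A} [IsSFiniteKernel πe]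
    [IsSFiniteKernel πb] {η : S → A → ℝ} {c c' : ℝ} (hc : 0 ≤ c) (hη_le : ∀ s a, η s a ≤ c)
    (hη : μ ⊗ₘ πe = (μ ⊗ₘ πb).withDensity fun z ↦ ENNReal.ofReal (η z.1 z.2))
    (h_next : stateKernel P πb ∘ₘ μ ≤ ENNReal.ofReal c' • μ) :
    stateKernel P πe ∘ₘ μ ≤ ENNReal.ofReal (c * c') • μ := by
  have h_policy : μ ⊗ₘ πe ≤ ENNReal.ofReal c • (μ ⊗ₘ πb) := hη ▸
    withDensity_le_smul (ae_of_all _ fun z ↦ ENNReal.ofReal_le_ofReal (hη_le z.1 z.2))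
  rw [ENNReal.ofReal_mul hc]
  exact stateKernel_comp_le_smul h_policy h_next

lemma dataLaw_eq_map_compProd [IsSFiniteKernel P] [IsSFiniteKernel R] [IsSFiniteKernel π]
    [SFinite μ] :
    dataLaw P R π μ = (μ ⊗ₘ π ⊗ₘ (R ×ₖ P)).map MeasurableEquiv.prodAssoc := by
  let outcome : Kernel (S × A) (S × A × ℝ × S) :=
    (Kernel.id ×ₖ (R ×ₖ P)).map MeasurableEquiv.prodAssoc
  have outcome_apply (s : S) (a : A) : outcome (s, a) =
      (R (s, a)).bind fun r ↦ (P (s, a)).map fun s' ↦ (s, a, r, s') := by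
    rw [← map_prod_eq_bind_map (f := fun y : ℝ × S ↦ (s, a, y)) (by fun_prop),
      Kernel.map_apply _ (by fun_prop), Kernel.prod_apply, Kernel.prod_apply, Kernel.id_apply,
      Measure.dirac_prod, Measure.map_map (by fun_prop) (by fun_prop)]
    rfl
  calc dataLaw P R π μ = (outcome ∘ₖ (Kernel.id ×ₖ π)) ∘ₘ μ := by
        simp only [dataLaw, ← outcome_apply, ← comp_id_prod_apply]
    _ = outcome ∘ₘ (μ ⊗ₘ π) := by
        rw [← Measure.comp_assoc, Measure.compProd_eq_comp_prod]
    _ = (μ ⊗ₘ π ⊗ₘ (R ×ₖ P)).map MeasurableEquiv.prodAssoc := by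
        rw [Measure.compProd_eq_comp_prod (μ ⊗ₘ π), Measure.map_comp _ _ (by fun_prop)]

lemma measurePreserving_dataLaw_reward [IsMarkovKernel P] [IsSFiniteKernel R]
    [IsSFiniteKernel π] [SFinite μ] :
    MeasurePreserving (fun x ↦ ((x.1, x.2.1), x.2.2.1)) (dataLaw P R π μ) (μ ⊗ₘ π ⊗ₘ R) := by
  refine ⟨by fun_prop, ?_⟩
  have fst_marginal : μ ⊗ₘ π ⊗ₘ R = μ ⊗ₘ π ⊗ₘ (R ×ₖ P).map Prod.fst := by
    rw [← Kernel.fst_eq, Kernel.fst_prod]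
  rw [fst_marginal, Measure.compProd_map measurable_fst, dataLaw_eq_map_compProd,
    Measure.map_map (by fun_prop) (by fun_prop)]
  rfl

lemma measurePreserving_dataLaw_transition [IsSFiniteKernel P] [IsMarkovKernel R]
    [IsSFiniteKernel π] [SFinite μ] :
    MeasurePreserving (fun x ↦ ((x.1, x.2.1), x.2.2.2)) (dataLaw P R π μ) (μ ⊗ₘ π ⊗ₘ P) := by
  refine ⟨by fun_prop, ?_⟩
  have snd_marginal : μ ⊗ₘ π ⊗ₘ P = μ ⊗ₘ π ⊗ₘ (R ×ₖ P).map Prod.snd := by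
    rw [← Kernel.snd_eq, Kernel.snd_prod]
  rw [snd_marginal, Measure.compProd_map measurable_snd, dataLaw_eq_map_compProd,
    Measure.map_map (by fun_prop) (by fun_prop)]
  rfl

variable [IsMarkovKernel P] [IsMarkovKernel R]

lemma measurePreserving_dataLaw_stateAction [IsSFiniteKernel π] [SFinite μ] :
    MeasurePreserving (fun x ↦ (x.1, x.2.1)) (dataLaw P R π μ) (μ ⊗ₘ π) :=
  (measurePreserving_fst_compProd _ P).comp measurePreserving_dataLaw_transition

variable [IsMarkovKernel π]

lemma measurePreserving_dataLaw_state [SFinite μ] :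
    MeasurePreserving Prod.fst (dataLaw P R π μ) μ :=
  (measurePreserving_fst_compProd μ π).comp measurePreserving_dataLaw_stateAction

lemma measurePreserving_dataLaw_stateTransition [SFinite μ] :
    MeasurePreserving (fun x ↦ (x.1, x.2.2.2)) (dataLaw P R π μ) (μ ⊗ₘ stateKernel P π) :=
  (MeasurePreserving.mk (by fun_prop) (map_compProd_compProd_eq_compProd_comp μ π P)).comp
    measurePreserving_dataLaw_transition

lemma measurePreserving_dataLaw_nextState [SFinite μ] :
    MeasurePreserving (fun x ↦ x.2.2.2) (dataLaw P R π μ) (stateKernel P π ∘ₘ μ) :=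
  (measurePreserving_snd_compProd μ (stateKernel P π)).comp
    measurePreserving_dataLaw_stateTransition

/-- The temporal-difference error of `v` and `q` at a sampled transition `(s, a, r, s')`. The state
values `v` and action values `q` are independent arguments, so that either may be perturbed. -/
def tdError (γ : ℝ) (v : S → ℝ) (q : S → A → ℝ) (x : S × A × ℝ × S) : ℝ :=
  x.2.2.1 + γ * v x.2.2.2 - q x.1 x.2.1

variable {γ : ℝ} {v : S → ℝ} {q : S → A → ℝ}

lemma memLp_tdError [SFinite μ] {p : ℝ≥0∞} (hr : MemLp (fun x ↦ x.2.2.1) p (dataLaw P R π μ))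
    (hv : MemLp v p (stateKernel P π ∘ₘ μ)) (hq : MemLp (Function.uncurry q) p (μ ⊗ₘ π)) :
    MemLp (tdError γ v q) p (dataLaw P R π μ) :=
  (hr.add ((hv.comp_measurePreserving measurePreserving_dataLaw_nextState).const_mul γ)).sub
    (hq.comp_measurePreserving measurePreserving_dataLaw_stateAction)

lemma integral_tdError_prod {s : S} {a : A} (hr : Integrable (fun r ↦ r) (R (s, a)))
    (hv : Integrable v (P (s, a))) :
    ∫ y, tdError γ v q (s, a, y) ∂(R ×ₖ P) (s, a) =
      (∫ r, r ∂(R (s, a))) + γ * ∫ s', v s' ∂(P (s, a)) - q s a := by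
  have h_reward := hr.comp_fst (P (s, a))
  have h_next := (hv.comp_snd (R (s, a))).const_mul γ
  have h_target : Integrable (fun y ↦ y.1 + γ * v y.2) ((R (s, a)).prod (P (s, a))) :=
    h_reward.add h_next
  simp only [tdError, Kernel.prod_apply]
  rw [integral_sub h_target (integrable_const _), integral_add h_reward h_next,
    integral_const_mul, integral_fun_fst (fun r : ℝ ↦ r), integral_fun_snd]
  simp only [probReal_univ, one_smul, integral_const]

lemma integral_mul_tdError_eq_zero [SFinite μ] {f : S × A → ℝ}
    (h_bellman : ∀ᵐ z ∂(μ ⊗ₘ π), q z.1 z.2 = (∫ r, r ∂(R z)) + γ * ∫ s', v s' ∂(P z))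
    (hr : Integrable (fun x ↦ x.2.2.1) (dataLaw P R π μ))
    (hv : Integrable v (stateKernel P π ∘ₘ μ))
    (hf : Integrable (fun x ↦ f (x.1, x.2.1) * tdError γ v q x) (dataLaw P R π μ)) :
    ∫ x, f (x.1, x.2.1) * tdError γ v q x ∂dataLaw P R π μ = 0 := by
  have hr_ae : ∀ᵐ z ∂(μ ⊗ₘ π), Integrable (fun r ↦ r) (R z) := by
    have hr_prod : Integrable Prod.snd (μ ⊗ₘ π ⊗ₘ R) :=
      (measurePreserving_dataLaw_reward.integrable_comp measurable_snd.aestronglyMeasurable).1 hr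
    exact ((Measure.integrable_compProd_iff hr_prod.1).1 hr_prod).1
  have hv_ae : ∀ᵐ z ∂(μ ⊗ₘ π), Integrable v (P z) :=
    Measure.ae_integrable_of_integrable_comp (by rwa [← stateKernel_comp])
  have conditional_mean : ∀ᵐ z ∂(μ ⊗ₘ π),
      ∫ y, tdError γ v q (z.1, z.2, y) ∂(R ×ₖ P) z = 0 := by
    filter_upwards [h_bellman, hr_ae, hv_ae] with z hz hrz hvz
    rw [integral_tdError_prod hrz hvz, hz, sub_self]
  rw [dataLaw_eq_map_compProd] at hf ⊢
  rw [integral_map_equiv]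
  rw [integrable_map_equiv] at hf
  calc ∫ z, f z.1 * tdError γ v q (z.1.1, z.1.2, z.2) ∂(μ ⊗ₘ π ⊗ₘ (R ×ₖ P))
      = ∫ z, f z * ∫ y, tdError γ v q (z.1, z.2, y) ∂(R ×ₖ P) z ∂(μ ⊗ₘ π) :=
        integral_compProd_fst_mul hf
    _ = 0 := by
        refine integral_eq_zero_of_ae ?_
        filter_upwards [conditional_mean] with z hz
        simp only [hz, mul_zero, Pi.zero_apply]

lemma integral_dataLaw_mul_nextState [SFinite μ] {f g : S → ℝ}
    (hfg : Integrable (fun z ↦ f z.1 * g z.2) (μ ⊗ₘ stateKernel P π)) :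
    ∫ x, f x.1 * g x.2.2.2 ∂dataLaw P R π μ = ∫ s, f s * ∫ s', g s' ∂stateKernel P π s ∂μ := by
  rw [integral_comp_of_measurePreserving (g := fun z ↦ f z.1 * g z.2)
    measurePreserving_dataLaw_stateTransition hfg.1]
  exact integral_compProd_fst_mul hfg

lemma integral_dataLaw_mul_stateAction [SFinite μ] {f : S → ℝ} {g : S × A → ℝ}
    (hfg : Integrable (fun z ↦ f z.1 * g z) (μ ⊗ₘ π)) :
    ∫ x, f x.1 * g (x.1, x.2.1) ∂dataLaw P R π μ = ∫ s, f s * ∫ a, g (s, a) ∂π s ∂μ := by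
  rw [integral_comp_of_measurePreserving (g := fun z ↦ f z.1 * g z)
    measurePreserving_dataLaw_stateAction hfg.1]
  exact integral_compProd_fst_mul hfg

lemma dataLaw_eq_withDensity {πe πb : Kernel S A} [IsSFiniteKernel πe] [IsSFiniteKernel πb]
    [SFinite μ] {f : S × A → ℝ≥0∞} (hf : Measurable f)
    (h : μ ⊗ₘ πe = (μ ⊗ₘ πb).withDensity f) :
    dataLaw P R πe μ = (dataLaw P R πb μ).withDensity fun x ↦ f (x.1, x.2.1) := by
  rw [dataLaw_eq_map_compProd, dataLaw_eq_map_compProd, h, withDensity_compProd hf,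
    ← map_withDensity_comp (by fun_prop) (by fun_prop)]
  rfl

/-- The state value function of the policy `π` induced by the action values `q`. -/
def stateValue (π : Kernel S A) (q : S → A → ℝ) (s : S) : ℝ := ∫ a, q s a ∂π s

variable {q' : S → A → ℝ}

lemma stateValue_sub_ae_eq [SFinite μ] (hq : Integrable (Function.uncurry q) (μ ⊗ₘ π))
    (hq' : Integrable (Function.uncurry q') (μ ⊗ₘ π)) :
    ∀ᵐ s ∂μ, ∫ a, (q' s a - q s a) ∂π s = stateValue π q' s - stateValue π q s := by
  filter_upwards [((Measure.integrable_compProd_iff hq.1).1 hq).1,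
    ((Measure.integrable_compProd_iff hq'.1).1 hq').1] with s hs hs'
  exact integral_sub hs' hs

lemma memLp_stateValue [SFinite μ] {p : ℝ≥0∞} (hp : 1 ≤ p) (hp_top : p ≠ ∞)
    (hq : MemLp (Function.uncurry q) p (μ ⊗ₘ π)) : MemLp (stateValue π q) p μ :=
  memLp_integral_compProd hp hp_top hq

lemma lpNorm_stateValue_sub_le [IsFiniteMeasure μ]
    (hq : MemLp (Function.uncurry q) 2 (μ ⊗ₘ π)) (hq' : MemLp (Function.uncurry q') 2 (μ ⊗ₘ π)) :
    lpNorm (stateValue π q' - stateValue π q) 2 μ ≤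
      lpNorm (Function.uncurry q' - Function.uncurry q) 2 (μ ⊗ₘ π) := by
  have h_sub := hq'.sub hq
  have h_value := (memLp_stateValue one_le_two ENNReal.ofNat_ne_top hq').sub
    (memLp_stateValue one_le_two ENNReal.ofNat_ne_top hq)
  rw [← toReal_eLpNorm h_value.1, ← toReal_eLpNorm h_sub.1,
    ← eLpNorm_congr_ae (g := stateValue π q' - stateValue π q)
      (stateValue_sub_ae_eq (hq.integrable one_le_two) (hq'.integrable one_le_two))]
  exact ENNReal.toReal_mono h_sub.eLpNorm_ne_top
    (eLpNorm_integral_compProd_le (f := Function.uncurry q' - Function.uncurry q)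
      one_le_two ENNReal.ofNat_ne_top h_sub.1)

instance [IsFiniteMeasure μ] : IsFiniteMeasure (dataLaw P R π μ) := by
  rw [dataLaw_eq_map_compProd]
  infer_instance

lemma integral_dataLaw_mul_next_sub_action [SFinite μ] {f g : S → ℝ} {h : S × A → ℝ}
    (hf : MemLp f 2 μ) (hg : MemLp g 2 (stateKernel P π ∘ₘ μ)) (hh : MemLp h 2 (μ ⊗ₘ π)) :
    ∫ x, f x.1 * (γ * g x.2.2.2 - h (x.1, x.2.1)) ∂dataLaw P R π μ =
      γ * ∫ s, f s * ∫ s', g s' ∂stateKernel P π s ∂μ - ∫ s, f s * ∫ a, h (s, a) ∂π s ∂μ := by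
  have int_next : Integrable (fun z ↦ f z.1 * g z.2) (μ ⊗ₘ stateKernel P π) :=
    (hf.comp_measurePreserving (measurePreserving_fst_compProd μ _)).integrable_mul
      (g := g ∘ Prod.snd) (hg.comp_measurePreserving (measurePreserving_snd_compProd μ _))
  have int_action : Integrable (fun z ↦ f z.1 * h z) (μ ⊗ₘ π) :=
    (hf.comp_measurePreserving (measurePreserving_fst_compProd μ π)).integrable_mul hh
  have int_next_data : Integrable (fun x ↦ f x.1 * g x.2.2.2) (dataLaw P R π μ) :=
    (measurePreserving_dataLaw_stateTransition.integrable_comp int_next.1).2 int_next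
  have int_action_data : Integrable (fun x ↦ f x.1 * h (x.1, x.2.1)) (dataLaw P R π μ) :=
    (measurePreserving_dataLaw_stateAction.integrable_comp int_action.1).2 int_action
  rw [← integral_dataLaw_mul_nextState (R := R) int_next,
    ← integral_dataLaw_mul_stateAction (P := P) (R := R) int_action, ← integral_const_mul,
    ← integral_sub (int_next_data.const_mul γ) int_action_data]
  simp only [mul_sub, mul_left_comm]

lemma integrable_mul_tdError_stateValue [SFinite μ] {f : S → ℝ} (hf : MemLp f 2 μ)
    {c : ℝ≥0∞} (hc : c ≠ ∞) (h_comp : stateKernel P π ∘ₘ μ ≤ c • μ)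
    (hr : MemLp (fun x ↦ x.2.2.1) 2 (dataLaw P R π μ))
    (hq : MemLp (Function.uncurry q) 2 (μ ⊗ₘ π)) :
    Integrable (fun x ↦ f x.1 * tdError γ (stateValue π q) q x) (dataLaw P R π μ) :=
  (hf.comp_measurePreserving measurePreserving_dataLaw_state).integrable_mul
    (memLp_tdError hr
      ((memLp_stateValue one_le_two ENNReal.ofNat_ne_top hq).of_measure_le_smul hc h_comp) hq)

lemma integral_mul_tdError_stateValue [IsFiniteMeasure μ] {f : S → ℝ} (hf : MemLp f 2 μ)
    {c : ℝ≥0∞} (hc : c ≠ ∞) (h_comp : stateKernel P π ∘ₘ μ ≤ c • μ)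
    (hr : MemLp (fun x ↦ x.2.2.1) 2 (dataLaw P R π μ))
    (hq : MemLp (Function.uncurry q) 2 (μ ⊗ₘ π))
    (h_bellman : ∀ᵐ z ∂(μ ⊗ₘ π),
      q z.1 z.2 = (∫ r, r ∂(R z)) + γ * ∫ s', stateValue π q s' ∂(P z))
    (hq' : MemLp (Function.uncurry q') 2 (μ ⊗ₘ π)) :
    ∫ x, f x.1 * tdError γ (stateValue π q') q' x ∂dataLaw P R π μ =
      γ * ∫ s, f s * ∫ s', (stateValue π q' - stateValue π q) s' ∂stateKernel P π s ∂μ -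
        ∫ s, f s * (stateValue π q' - stateValue π q) s ∂μ := by
  have value_next {u : S → A → ℝ} (hu : MemLp (Function.uncurry u) 2 (μ ⊗ₘ π)) :
      MemLp (stateValue π u) 2 (stateKernel P π ∘ₘ μ) :=
    (memLp_stateValue one_le_two ENNReal.ofNat_ne_top hu).of_measure_le_smul hc h_comp
  have int_td := integrable_mul_tdError_stateValue (γ := γ) hf hc h_comp hr hq
  have int_td' := integrable_mul_tdError_stateValue (γ := γ) hf hc h_comp hr hq'
  have td_zero : ∫ x, f x.1 * tdError γ (stateValue π q) q x ∂dataLaw P R π μ = 0 :=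
    integral_mul_tdError_eq_zero (f := f ∘ Prod.fst) h_bellman (hr.integrable one_le_two)
      ((value_next hq).integrable one_le_two) int_td
  have action_value : ∫ s, f s * ∫ a, (Function.uncurry q' - Function.uncurry q) (s, a) ∂π s ∂μ =
      ∫ s, f s * (stateValue π q' - stateValue π q) s ∂μ := by
    refine integral_congr_ae ?_
    filter_upwards [stateValue_sub_ae_eq (hq.integrable one_le_two)
      (hq'.integrable one_le_two)] with s hs
    exact congrArg (f s * ·) hs
  rw [← action_value, ← integral_dataLaw_mul_next_sub_action (R := R) hf
    ((value_next hq').sub (value_next hq)) (hq'.sub hq), ← sub_zero (∫ x, _ ∂_), ← td_zero,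
    ← integral_sub int_td' int_td]
  refine integral_congr_ae (ae_of_all _ fun x ↦ ?_)
  simp only [tdError, Pi.sub_apply, Function.uncurry_apply_pair]
  ring

instance [IsProbabilityMeasure μ] : IsProbabilityMeasure (dataLaw P R π μ) := by
  rw [dataLaw_eq_map_compProd]
  exact Measure.isProbabilityMeasure_map (by fun_prop)

lemma integral_psiDRL {μe μb : Measure S} [IsProbabilityMeasure μb] {πe πb : Kernel S A}
    [IsMarkovKernel πe] [IsMarkovKernel πb] {η : S → A → ℝ}
    (hη_meas : Measurable (Function.uncurry η)) (hη_nonneg : ∀ s a, 0 ≤ η s a)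
    (hη : μb ⊗ₘ πe = (μb ⊗ₘ πb).withDensity fun z ↦ ENNReal.ofReal (η z.1 z.2)) {w' : S → ℝ}
    (h_int : Integrable (fun x ↦ w' x.1 * tdError γ (stateValue πe q') q' x)
      (dataLaw P R πe μb)) :
    ∫ x, psiDRL γ μe πe η w' q' x ∂dataLaw P R πb μb =
      (1 - γ) * ∫ s, stateValue πe q' s ∂μe +
        ∫ x, w' x.1 * tdError γ (stateValue πe q') q' x ∂dataLaw P R πe μb := by
  have η_aemeas : AEMeasurable (fun x : S × A × ℝ × S ↦ η x.1 x.2.1) (dataLaw P R πb μb) :=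
    (hη_meas.comp (by fun_prop : Measurable fun x : S × A × ℝ × S ↦ (x.1, x.2.1))).aemeasurable
  have η_nonneg_ae : 0 ≤ᵐ[dataLaw P R πb μb] fun x ↦ η x.1 x.2.1 :=
    ae_of_all _ fun x ↦ hη_nonneg x.1 x.2.1
  have reweight : dataLaw P R πe μb =
      (dataLaw P R πb μb).withDensity fun x ↦ ENNReal.ofReal (η x.1 x.2.1) :=
    dataLaw_eq_withDensity (f := fun z ↦ ENNReal.ofReal (η z.1 z.2)) hη_meas.ennreal_ofReal hη
  rw [reweight, integrable_withDensity_ofReal_iff η_aemeas η_nonneg_ae] at h_int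
  rw [reweight, integral_withDensity_ofReal η_aemeas η_nonneg_ae]
  calc ∫ x, psiDRL γ μe πe η w' q' x ∂dataLaw P R πb μb
      = ∫ x, ((1 - γ) * ∫ s, stateValue πe q' s ∂μe) +
          η x.1 x.2.1 * (w' x.1 * tdError γ (stateValue πe q') q' x) ∂dataLaw P R πb μb := by
        simp only [psiDRL, tdError, stateValue, mul_left_comm (η _ _), mul_assoc]
    _ = _ := by
        rw [integral_add (integrable_const _) h_int, integral_const, probReal_univ, one_smul]

lemma integral_psiDRL_sub_eq {μe μb : Measure S} [SFinite μe] [IsProbabilityMeasure μb]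
    {πe πb : Kernel S A} [IsMarkovKernel πe] [IsMarkovKernel πb] (hγ : γ ∈ Set.Ioo 0 1)
    {η : S → A → ℝ} (hη_meas : Measurable (Function.uncurry η)) (hη_nonneg : ∀ s a, 0 ≤ η s a)
    (hη : μb ⊗ₘ πe = (μb ⊗ₘ πb).withDensity fun z ↦ ENNReal.ofReal (η z.1 z.2))
    {c : ℝ≥0∞} (hc : c ≠ ∞) (h_comp : stateKernel P πe ∘ₘ μb ≤ c • μb)
    (hr : MemLp (fun x ↦ x.2.2.1) 2 (dataLaw P R πe μb))
    {w w' : S → ℝ} (hw_nonneg : 0 ≤ᵐ[μb] w) (hw_memLp : MemLp w 2 μb)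
    (hw : dgamma γ μe (stateKernel P πe) = μb.withDensity fun s ↦ ENNReal.ofReal (w s))
    (hq : MemLp (Function.uncurry q) 2 (μb ⊗ₘ πe))
    (h_bellman : ∀ᵐ z ∂(μb ⊗ₘ πe),
      q z.1 z.2 = (∫ r, r ∂(R z)) + γ * ∫ s', stateValue πe q s' ∂(P z))
    (hw' : MemLp w' 2 μb) (hq' : MemLp (Function.uncurry q') 2 (μb ⊗ₘ πe)) :
    ∫ x, psiDRL γ μe πe η w' q' x ∂dataLaw P R πb μb - (1 - γ) * ∫ s, stateValue πe q s ∂μe =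
      γ * ∫ s, (w' - w) s *
          ∫ s', (stateValue πe q' - stateValue πe q) s' ∂stateKernel P πe s ∂μb -
        ∫ s, (w' - w) s * (stateValue πe q' - stateValue πe q) s ∂μb := by
  have hv := memLp_stateValue one_le_two ENNReal.ofNat_ne_top hq
  have hv' := memLp_stateValue one_le_two ENNReal.ofNat_ne_top hq'
  set δ := stateValue πe q' - stateValue πe q
  have hδ : MemLp δ 2 μb := hv'.sub hv
  have hKδ : MemLp (fun s ↦ ∫ s', δ s' ∂stateKernel P πe s) 2 μb :=
    memLp_integral_comp one_le_two ENNReal.ofNat_ne_top (hδ.of_measure_le_smul hc h_comp)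
  have int_visit {g : S → ℝ} (hg : MemLp g 2 μb) :
      Integrable g (dgamma γ μe (stateKernel P πe)) := by
    rw [hw, integrable_withDensity_ofReal_iff hw_memLp.1.aemeasurable hw_nonneg]
    exact hw_memLp.integrable_mul hg
  have start : ∫ s, δ s ∂μe = ∫ s, stateValue πe q' s ∂μe - ∫ s, stateValue πe q s ∂μe :=
    integral_sub (integrable_of_integrable_dgamma hγ.2 (int_visit hv'))
      (integrable_of_integrable_dgamma hγ.2 (int_visit hv))
  have balance := integral_mul_of_dgamma_eq_withDensity hγ hw_memLp.1.aemeasurable hw_nonneg hw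
    (int_visit hδ)
  rw [integral_psiDRL hη_meas hη_nonneg hη
      (integrable_mul_tdError_stateValue hw' hc h_comp hr hq'),
    integral_mul_tdError_stateValue hw' hc h_comp hr hq h_bellman hq',
    integral_sub_mul_of_memLp_two hw' hw_memLp hδ, integral_sub_mul_of_memLp_two hw' hw_memLp hKδ,
    balance, start]
  ring

lemma memLp_reward_of_support [IsFiniteMeasure μ] {C : ℝ}
    (hR : ∀ z, R z (Set.Icc 0 C)ᶜ = 0) (p : ℝ≥0∞) :
    MemLp (fun x ↦ x.2.2.1) p (dataLaw P R π μ) := by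
  have reward_mem : ∀ᵐ y ∂(μ ⊗ₘ π ⊗ₘ R), y.2 ∈ Set.Icc 0 C :=
    (Measure.ae_compProd_iff (measurable_snd measurableSet_Icc)).2
      (ae_of_all _ fun z ↦ mem_ae_iff.2 (hR z))
  have reward_memLp : MemLp Prod.snd p (μ ⊗ₘ π ⊗ₘ R) := by
    refine .of_bound measurable_snd.aestronglyMeasurable C ?_
    filter_upwards [reward_mem] with y hy
    exact (abs_of_nonneg hy.1).trans_le hy.2
  exact reward_memLp.comp_measurePreserving measurePreserving_dataLaw_reward

end MarkovDecisionProcess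

theorem doubly_robust_bias_bound_general
    (P : Kernel (S × A) S) [IsMarkovKernel P]
    (R : Kernel (S × A) ℝ) [IsMarkovKernel R]
    (γ : ℝ) (hγ0 : 0 < γ) (hγ1 : γ < 1)
    (πe πb : Kernel S A) [IsMarkovKernel πe] [IsMarkovKernel πb]
    (μe μb : Measure S) [SFinite μe] [IsProbabilityMeasure μb]
    (hr : MemLp (fun x ↦ x.2.2.1) 2 (dataLaw P R πe μb))
    (η : S → A → ℝ) (hη_meas : Measurable (Function.uncurry η))
    (Cη : ℝ) (hη_bdd : ∀ s a, 0 ≤ η s a ∧ η s a ≤ Cη)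
    (hη : ∀ᵐ s ∂μb, πe s = (πb s).withDensity fun a ↦ ENNReal.ofReal (η s a))
    (CS' : ℝ) (hac : stateKernel P πb ∘ₘ μb ≪ μb)
    (hdens : ∀ᵐ s ∂μb, (stateKernel P πb ∘ₘ μb).rnDeriv μb s ≤ ENNReal.ofReal CS')
    (w : S → ℝ) (hw_nonneg : 0 ≤ᵐ[μb] w) (hw_memLp : MemLp w 2 μb)
    (hw : dgamma γ μe (stateKernel P πe) = μb.withDensity fun s ↦ ENNReal.ofReal (w s))
    (q : S → A → ℝ) (hq : MemLp (Function.uncurry q) 2 (μb ⊗ₘ πe))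
    (hq_bellman : ∀ᵐ z ∂(μb ⊗ₘ πe), q z.1 z.2 =
      (∫ r, r ∂(R z)) + γ * ∫ s', (∫ a', q s' a' ∂(πe s')) ∂(P z))
    (w' : S → ℝ) (hw' : MemLp w' 2 μb)
    (q' : S → A → ℝ) (hq' : MemLp (Function.uncurry q') 2 (μb ⊗ₘ πe)) :
    |∫ x, psiDRL γ μe πe η w' q' x ∂(dataLaw P R πb μb) -
        (1 - γ) * ∫ s, (∫ a, q s a ∂(πe s)) ∂μe| ≤
      (1 + γ * √(Cη * CS')) * √(∫ s, (w' s - w s) ^ 2 ∂μb) *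
        √(∫ p, (q' p.1 p.2 - q p.1 p.2) ^ 2 ∂(μb ⊗ₘ πe)) := by
  have hCη : 0 ≤ Cη := by
    obtain ⟨s⟩ := nonempty_of_isProbabilityMeasure μb
    obtain ⟨a⟩ := nonempty_of_isProbabilityMeasure (πe s)
    exact (hη_bdd s a).1.trans (hη_bdd s a).2
  have hη_prod := compProd_eq_withDensity hη_meas.ennreal_ofReal
    (fun _ _ ↦ ENNReal.ofReal_ne_top) hη
  have h_comp := stateKernel_comp_le_of_density_le hCη (fun s a ↦ (hη_bdd s a).2) hη_prod
    (le_smul_of_rnDeriv_le hac hdens)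
  have bias := integral_psiDRL_sub_eq ⟨hγ0, hγ1⟩ hη_meas (fun s a ↦ (hη_bdd s a).1) hη_prod
    ENNReal.ofReal_ne_top h_comp hr hw_nonneg hw_memLp hw hq hq_bellman hw' hq'
  have hδ := (memLp_stateValue one_le_two ENNReal.ofNat_ne_top hq').sub
    (memLp_stateValue one_le_two ENNReal.ofNat_ne_top hq)
  calc |∫ x, psiDRL γ μe πe η w' q' x ∂(dataLaw P R πb μb) -
        (1 - γ) * ∫ s, (∫ a, q s a ∂(πe s)) ∂μe|
      ≤ (1 + γ * √(Cη * CS')) * lpNorm (w' - w) 2 μb *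
          lpNorm (stateValue πe q' - stateValue πe q) 2 μb :=
        bias ▸ abs_integral_mul_discounted_sub_le hγ0.le h_comp (hw'.sub hw_memLp) hδ
    _ ≤ (1 + γ * √(Cη * CS')) * lpNorm (w' - w) 2 μb *
          lpNorm (Function.uncurry q' - Function.uncurry q) 2 (μb ⊗ₘ πe) := by
        gcongr
        · exact mul_nonneg (by positivity) lpNorm_nonneg
        · exact lpNorm_stateValue_sub_le hq hq'
    _ = _ := by
        rw [lpNorm_two_eq_sqrt_integral_sq (hw'.sub hw_memLp).1,
          lpNorm_two_eq_sqrt_integral_sq (hq'.sub hq).1]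
        rfl

/-- quantitative doubly robust bias bound:
`|E_D[ψ(·; w', q')] − ρ| ≤ (1 + γ√(C_η C_{S'}))·‖w'−w‖_{L²(μ_b)}·‖q'−q‖_{L²(ν_e)}`. -/
theorem doubly_robust_bias_bound
    (P : Kernel (S × A) S) [IsMarkovKernel P]
    (Rmax : ℝ) (hRmax : 0 < Rmax)
    (R : Kernel (S × A) ℝ) [IsMarkovKernel R]
    (hR : ∀ p : S × A, R p (Set.Icc (0 : ℝ) Rmax)ᶜ = 0)
    (γ : ℝ) (hγ0 : 0 < γ) (hγ1 : γ < 1)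
    (πe πb : Kernel S A) [IsMarkovKernel πe] [IsMarkovKernel πb]
    (μe μb : Measure S) [IsProbabilityMeasure μe] [IsProbabilityMeasure μb]
    -- the policy density ratio η, bounded by C_η
    (η : S → A → ℝ) (hη_meas : Measurable (Function.uncurry η))
    (Cη : ℝ) (hη_bdd : ∀ s a, 0 ≤ η s a ∧ η s a ≤ Cη)
    (hη : ∀ᵐ s ∂μb, πe s = (πb s).withDensity fun a => ENNReal.ofReal (η s a))
    -- the next-state marginal has density bounded by C_{S'} with respect to μ_b
    (CS' : ℝ)
    (hac : (μb.bind fun s => stateKernel P πb s).AbsolutelyContinuous μb)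
    (hdens : ∀ᵐ s ∂μb,
      (μb.bind fun u => stateKernel P πb u).rnDeriv μb s ≤ ENNReal.ofReal CS')
    -- the stationary density ratio w, a bounded measurable density of d_γ wrt μ_b
    (w : S → ℝ) (hw_meas : Measurable w)
    (hw_bdd : ∃ C : ℝ, ∀ s, 0 ≤ w s ∧ w s ≤ C)
    (hw : dgamma γ μe (stateKernel P πe) =
      μb.withDensity fun s => ENNReal.ofReal (w s))
    -- the q-function: bounded, measurable and satisfying the Bellman evaluation equation
    (q : S → A → ℝ) (hq_meas : Measurable (Function.uncurry q))
    (hq_bdd : ∃ C : ℝ, ∀ s a, |q s a| ≤ C)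
    (hq_bellman : ∀ s a, q s a =
      (∫ r, r ∂(R (s, a))) + γ * ∫ s', (∫ a', q s' a' ∂(πe s')) ∂(P (s, a)))
    -- bounded measurable nuisance candidates
    (w' : S → ℝ) (hw'_meas : Measurable w') (hw'_bdd : ∃ C : ℝ, ∀ s, |w' s| ≤ C)
    (q' : S → A → ℝ) (hq'_meas : Measurable (Function.uncurry q'))
    (hq'_bdd : ∃ C : ℝ, ∀ s a, |q' s a| ≤ C) :
    |∫ x, psiDRL γ μe πe η w' q' x ∂(dataLaw P R πb μb) -
        (1 - γ) * ∫ s, (∫ a, q s a ∂(πe s)) ∂μe| ≤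
      (1 + γ * Real.sqrt (Cη * CS')) *
        Real.sqrt (∫ s, (w' s - w s) ^ 2 ∂μb) *
        Real.sqrt (∫ p, (q' p.1 p.2 - q p.1 p.2) ^ 2 ∂(μb ⊗ₘ πe)) :=
  doubly_robust_bias_bound_general P R γ hγ0 hγ1 πe πb μe μb
    (memLp_reward_of_support hR 2) η hη_meas Cη hη_bdd hη CS' hac hdens
    w (ae_of_all _ fun s ↦ (hw_bdd.choose_spec s).1)
    (memLp_of_nonneg_of_exists_bound hw_meas hw_bdd 2) hw
    q (memLp_uncurry_of_exists_bound hq_meas hq_bdd 2) (ae_of_all _ fun z ↦ hq_bellman z.1 z.2)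
    w' (memLp_of_exists_bound hw'_meas hw'_bdd 2)
    q' (memLp_uncurry_of_exists_bound hq'_meas hq'_bdd 2)

end
end

section
/- (Term-by-term comparison of the Markov and non-Markov efficiency bounds: EB(M_2) ≤ EB(M_1).) Assume η is bounded. Fix k ≥ 0 and a bounded measurable f : S × A × ℝ × S → ℝ, and set Z = f(s_k, a_k, r_k, s_{k+1}). Let 𝓕_k = σ(s_0, a_0, …, s_k, a_k) and 𝒢_k = σ(s_k, a_k), let ν_k = Π_{j=0}^k η(s_j, a_j) be the cumulative density ratio and μ_k = E_{P_b}[ν_k | 𝒢_k] the marginal density ratio, and let Var(Z | ·) denote conditional variance. Then E_{P_b}[ μ_k² · Var(Z | 𝒢_k) ] ≤ E_{P_b}[ ν_k² · Var(Z | 𝓕_k) ]. -/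
open MeasureTheory ProbabilityTheory
open scoped ENNReal

noncomputable section

variable {S A : Type*} [MeasurableSpace S] [MeasurableSpace A]

/-- The law of the initial triple `(s₀, a₀, r₀)` under the behavior policy. -/
def initLaw (R : Kernel (S × A) ℝ) (πb : Kernel S A) (μb : Measure S) :
    Measure (S × A × ℝ) :=
  μb.bind fun s => (πb s).bind fun a => (R (s, a)).map fun r => (s, a, r)

/-- The one-step transition of the behavior trajectory. -/
def stepLaw (P : Kernel (S × A) S) (R : Kernel (S × A) ℝ) (πb : Kernel S A)
    (x : S × A × ℝ) : Measure (S × A × ℝ) :=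
  (P (x.1, x.2.1)).bind fun s' => (πb s').bind fun a' =>
    (R (s', a')).map fun r' => (s', a', r')

/-- The law of the length-`(n+1)` prefix of the behavior trajectory. -/
def finLaw (P : Kernel (S × A) S) (R : Kernel (S × A) ℝ) (πb : Kernel S A)
    (μb : Measure S) : (n : ℕ) → Measure (Fin (n + 1) → S × A × ℝ)
  | 0 => (initLaw R πb μb).map fun x => fun _ => x
  | n + 1 => (finLaw P R πb μb n).bind fun path =>
      (stepLaw P R πb (path (Fin.last n))).map (Fin.snoc path)

/-- The transition observed at time `t` along a trajectory. -/
def Xt (t : ℕ) (ω : ℕ → S × A × ℝ) : S × A × ℝ × S :=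
  ((ω t).1, (ω t).2.1, (ω t).2.2, (ω (t + 1)).1)

/-- The σ-algebra `𝓕_k = σ(s₀, a₀, …, s_k, a_k)`. -/
def historySA (k : ℕ) : MeasurableSpace (ℕ → S × A × ℝ) :=
  ⨆ j : Fin (k + 1),
    MeasurableSpace.comap (fun ω : ℕ → S × A × ℝ => ((ω (j : ℕ)).1, (ω (j : ℕ)).2.1))
      inferInstance

/-- The σ-algebra `𝓖_k = σ(s_k, a_k)`. -/
def currentSA (k : ℕ) : MeasurableSpace (ℕ → S × A × ℝ) :=
  MeasurableSpace.comap (fun ω : ℕ → S × A × ℝ => ((ω k).1, (ω k).2.1)) inferInstance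

/-- The conditional variance of `g` given the σ-algebra `m`, under `μ`. -/
def condVar {Ω : Type*} {m0 : MeasurableSpace Ω} (m : MeasurableSpace Ω)
    (μ : @Measure Ω m0) (g : Ω → ℝ) : Ω → ℝ :=
  μ[fun ω => (g ω - (μ[g|m]) ω) ^ 2 | m]

/-!
By the Markov property the conditional law of `(r_k, s_{k+1})` given the state-action history
`(s₀, a₀, …, s_k, a_k)` is `R ×ₖ P` evaluated at `(s_k, a_k)`. It depends on the history through
its last entry only, so the first two conditional moments of `Z = f(s_k, a_k, r_k, s_{k+1})`, hence
its conditional variance `V`, are the same given `𝓕_k` as given `𝓖_k`. Both sides of the inequality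
thus carry the same `𝓖_k`-measurable weight `V ≥ 0`, and what remains is
`E[E[ν_k | 𝓖_k]² V] ≤ E[ν_k² V]`: conditioning on `𝓖_k` contracts the `V`-weighted `L²` norm.
-/

section CondExp

variable {Ω : Type*} {m m' m₀ : MeasurableSpace Ω} {μ : Measure Ω}

lemma condVar_nonneg (Z : Ω → ℝ) : 0 ≤ᵐ[μ] Var[Z; μ | m] :=
  condExp_nonneg (ae_of_all _ fun _ => sq_nonneg _)

variable [IsFiniteMeasure μ]

lemma integral_sq_condExp_le (hm : m ≤ m₀) {X : Ω → ℝ} (hX : MemLp X 2 μ) :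
    ∫ ω, (μ[X | m]) ω ^ 2 ∂μ ≤ ∫ ω, X ω ^ 2 ∂μ := by
  have jensen : (fun ω => (μ[X | m]) ω ^ 2) ≤ᵐ[μ] μ[fun ω => X ω ^ 2 | m] :=
    (even_two.convexOn_pow (𝕜 := ℝ)).map_condExp_le_of_finiteDimensional hm
      (hX.integrable one_le_two) hX.integrable_sq
  calc ∫ ω, (μ[X | m]) ω ^ 2 ∂μ
      ≤ ∫ ω, (μ[fun ω => X ω ^ 2 | m]) ω ∂μ :=
        integral_mono_ae (hX.condExp one_le_two).integrable_sq integrable_condExp jensen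
    _ = ∫ ω, X ω ^ 2 ∂μ := integral_condExp hm

lemma integral_sq_condExp_mul_le (hm : m ≤ m₀) {ν V : Ω → ℝ} (hν : Integrable ν μ)
    (hV : StronglyMeasurable[m] V) (hV_nonneg : 0 ≤ᵐ[μ] V)
    (hνV : Integrable (fun ω => ν ω ^ 2 * V ω) μ) :
    ∫ ω, (μ[ν | m]) ω ^ 2 * V ω ∂μ ≤ ∫ ω, ν ω ^ 2 * V ω ∂μ := by
  -- Absorb the weight: `μ[ν | m]² V = (μ[ν √V | m])²`, and conditioning contracts `L²`.
  have hW : StronglyMeasurable[m] fun ω => √(V ω) := Real.continuous_sqrt.comp_stronglyMeasurable hV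
  have sq_mul_sqrt (a : Ω → ℝ) :
      (fun ω => (a ω * √(V ω)) ^ 2) =ᵐ[μ] fun ω => a ω ^ 2 * V ω := by
    filter_upwards [hV_nonneg] with ω hω
    rw [mul_pow, Real.sq_sqrt hω]
  have hνW : MemLp (fun ω => ν ω * √(V ω)) 2 μ :=
    (memLp_two_iff_integrable_sq (hν.1.mul (hW.mono hm).aestronglyMeasurable)).2
      (hνV.congr (sq_mul_sqrt ν).symm)
  have pull_out : μ[fun ω => ν ω * √(V ω) | m] =ᵐ[μ] fun ω => (μ[ν | m]) ω * √(V ω) :=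
    condExp_mul_of_stronglyMeasurable_right hW (hνW.integrable one_le_two) hν
  calc ∫ ω, (μ[ν | m]) ω ^ 2 * V ω ∂μ
      = ∫ ω, (μ[fun ω => ν ω * √(V ω) | m]) ω ^ 2 ∂μ := by
        refine integral_congr_ae ?_
        filter_upwards [pull_out, sq_mul_sqrt (μ[ν | m])] with ω h_pull h_sq
        rw [h_pull, h_sq]
    _ ≤ ∫ ω, (ν ω * √(V ω)) ^ 2 ∂μ := integral_sq_condExp_le hm hνW
    _ = ∫ ω, ν ω ^ 2 * V ω ∂μ := integral_congr_ae (sq_mul_sqrt ν)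

lemma condVar_ae_eq_of_condExp_ae_eq (hm : m ≤ m₀) (hm' : m' ≤ m₀) {Z : Ω → ℝ} (hZ : MemLp Z 2 μ)
    (h_mean : μ[Z | m] =ᵐ[μ] μ[Z | m']) (h_sq : μ[Z ^ 2 | m] =ᵐ[μ] μ[Z ^ 2 | m']) :
    Var[Z; μ | m] =ᵐ[μ] Var[Z; μ | m'] :=
  (condVar_ae_eq_condExp_sq_sub_sq_condExp hm hZ).trans <|
    (h_sq.sub (h_mean.pow_const 2)).trans
      (condVar_ae_eq_condExp_sq_sub_sq_condExp hm' hZ).symm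

lemma condVar_ae_le_sq_of_abs_le (hm : m ≤ m₀) {Z : Ω → ℝ} (hZ : AEStronglyMeasurable Z μ)
    {C : ℝ} (hC : ∀ᵐ ω ∂μ, |Z ω| ≤ C) : ∀ᵐ ω ∂μ, (Var[Z; μ | m]) ω ≤ C ^ 2 := by
  have hZ_memLp : MemLp Z 2 μ := .of_bound hZ C hC
  have h_sq : μ[Z ^ 2 | m] ≤ᵐ[μ] μ[fun _ => C ^ 2 | m] :=
    condExp_mono hZ_memLp.integrable_sq (integrable_const _) <| by
      filter_upwards [hC] with ω hω using sq_le_sq' (abs_le.1 hω).1 (abs_le.1 hω).2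
  filter_upwards [condVar_ae_le_condExp_sq hm hZ_memLp, h_sq] with ω h_var h_le
  rw [condExp_const hm] at h_le
  exact h_var.trans h_le

lemma integrable_mul_condVar_of_abs_le (hm : m ≤ m₀) {w Z : Ω → ℝ} (hw : Integrable w μ)
    (hZ : AEStronglyMeasurable Z μ) {C : ℝ} (hC : ∀ᵐ ω ∂μ, |Z ω| ≤ C) :
    Integrable (fun ω => w ω * (Var[Z; μ | m]) ω) μ := by
  refine hw.mul_bdd (c := C ^ 2) integrable_condVar.aestronglyMeasurable ?_
  filter_upwards [condVar_nonneg (m := m) Z, condVar_ae_le_sq_of_abs_le hm hZ hC]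
    with ω h_nonneg h_le
  rwa [Real.norm_of_nonneg h_nonneg]

end CondExp

section HasCondDistrib

variable {Ω β γ δ : Type*} {mΩ : MeasurableSpace Ω} {mβ : MeasurableSpace β}
  {mγ : MeasurableSpace γ} {mδ : MeasurableSpace δ} {μ : Measure Ω}

lemma hasCondDistrib_prodMk {X : Ω → β} {Y : Ω → γ} {Z : Ω → δ} {κ : Kernel β γ}
    {η : Kernel (β × γ) δ} (hY : HasCondDistrib Y X κ μ)
    (hZ : HasCondDistrib Z (fun ω => (X ω, Y ω)) η μ) :
    HasCondDistrib (fun ω => (Y ω, Z ω)) X (κ ⊗ₖ η) μ where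
  aemeasurable := by
    have := hZ.aemeasurable_snd
    have := hY.aemeasurable
    fun_prop
  map_eq := by
    rw [← Measure.compProd_assoc', ← hY.map_eq, ← hZ.map_eq,
      AEMeasurable.map_map_of_aemeasurable (by fun_prop) hZ.aemeasurable]
    rfl

lemma prodMkLeft_compProd {α β γ δ : Type*} [MeasurableSpace α] [MeasurableSpace β]
    [MeasurableSpace γ] [MeasurableSpace δ] (κ : Kernel α β) [IsSFiniteKernel κ]
    (η : Kernel (α × β) γ) [IsSFiniteKernel η] :
    (κ ⊗ₖ η).prodMkLeft δ =
      κ.prodMkLeft δ ⊗ₖ η.comap (fun x : (δ × α) × β => (x.1.2, x.2)) (by fun_prop) := by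
  ext1 x
  rw [Kernel.prodMkLeft_apply, Kernel.compProd_apply_eq_compProd_sectR,
    Kernel.compProd_apply_eq_compProd_sectR]
  rfl

lemma hasCondDistrib_of_hasLaw_compProd {X : Ω → β × γ} {ν : Measure β} [SFinite ν]
    {κ : Kernel β γ} [IsMarkovKernel κ] (h : HasLaw X (ν ⊗ₘ κ) μ) :
    HasCondDistrib (fun ω => (X ω).2) (fun ω => (X ω).1) κ μ := by
  have h_fst : μ.map (fun ω => (X ω).1) = ν := by
    have := h.aemeasurable
    rw [← Measure.fst_compProd ν κ, ← h.map_eq, Measure.fst,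
      AEMeasurable.map_map_of_aemeasurable (by fun_prop) h.aemeasurable]
    rfl
  rwa [HasCondDistrib, h_fst]

variable [IsFiniteMeasure μ]

lemma condExp_ae_eq_integral_of_hasCondDistrib {F : Type*} [NormedAddCommGroup F]
    [NormedSpace ℝ F] [CompleteSpace F] {X : Ω → β} {Y : Ω → γ} {κ : Kernel β γ}
    [IsSFiniteKernel κ] (hX : Measurable X) (h : HasCondDistrib Y X κ μ) {f : β × γ → F}
    (hf : StronglyMeasurable f) (hf_int : Integrable (fun ω => f (X ω, Y ω)) μ) :
    μ[fun ω => f (X ω, Y ω) | mβ.comap X] =ᵐ[μ] fun ω => ∫ y, f (X ω, y) ∂κ (X ω) := by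
  have hf_int' : Integrable f (μ.map X ⊗ₘ κ) := by
    rwa [← h.map_eq, integrable_map_measure hf.aestronglyMeasurable h.aemeasurable]
  have h_integral : StronglyMeasurable fun x => ∫ y, f (x, y) ∂κ x := hf.integral_kernel_prod_right'
  refine (ae_eq_condExp_of_forall_setIntegral_eq hX.comap_le hf_int (fun s _ _ => ?_) ?_ ?_).symm
  · exact (hf_int'.integral_compProd.comp_measurable hX).integrableOn
  · rintro s ⟨t, ht, rfl⟩ -
    have h_disint : ∫ x in t, ∫ y, f (x, y) ∂κ x ∂μ.map X =
        ∫ z in t ×ˢ Set.univ, f z ∂(μ.map X ⊗ₘ κ) := by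
      simp_rw [Measure.setIntegral_compProd ht .univ hf_int'.integrableOn, Measure.restrict_univ]
    rw [← setIntegral_map ht h_integral.aestronglyMeasurable hX.aemeasurable,
      h_disint, ← h.map_eq, setIntegral_map (ht.prod .univ) hf.aestronglyMeasurable h.aemeasurable,
      Set.mk_preimage_prod, Set.preimage_univ, Set.inter_univ]
  · exact (h_integral.comp_measurable (comap_measurable X)).aestronglyMeasurable

variable {X : Ω → β} {Y : Ω → δ} {g : β → γ} {hg : Measurable g} {κ : Kernel γ δ}
  [IsSFiniteKernel κ]

lemma condExp_comap_ae_eq_of_hasCondDistrib {F : Type*} [NormedAddCommGroup F]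
    [NormedSpace ℝ F] [CompleteSpace F] (hX : Measurable X)
    (h : HasCondDistrib Y X (κ.comap g hg) μ) {f : γ × δ → F} (hf : StronglyMeasurable f)
    (hf_int : Integrable (fun ω => f (g (X ω), Y ω)) μ) :
    μ[fun ω => f (g (X ω), Y ω) | mβ.comap X] =ᵐ[μ]
      μ[fun ω => f (g (X ω), Y ω) | mγ.comap (g ∘ X)] :=
  have hf' : StronglyMeasurable fun p : β × δ => f (g p.1, p.2) :=
    hf.comp_measurable (by fun_prop)
  (condExp_ae_eq_integral_of_hasCondDistrib hX h hf' hf_int).trans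
    (condExp_ae_eq_integral_of_hasCondDistrib (hg.comp hX) h.comp_right hf hf_int).symm

lemma condVar_comap_ae_eq_of_hasCondDistrib (hX : Measurable X)
    (h : HasCondDistrib Y X (κ.comap g hg) μ) {f : γ × δ → ℝ} (hf : Measurable f)
    (hf_memLp : MemLp (fun ω => f (g (X ω), Y ω)) 2 μ) :
    Var[fun ω => f (g (X ω), Y ω); μ | mβ.comap X] =ᵐ[μ]
      Var[fun ω => f (g (X ω), Y ω); μ | mγ.comap (g ∘ X)] :=
  condVar_ae_eq_of_condExp_ae_eq hX.comap_le (hg.comp hX).comap_le hf_memLp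
    (condExp_comap_ae_eq_of_hasCondDistrib hX h hf.stronglyMeasurable
      (hf_memLp.integrable one_le_two))
    (condExp_comap_ae_eq_of_hasCondDistrib hX h (hf.pow_const 2).stronglyMeasurable
      hf_memLp.integrable_sq)

end HasCondDistrib

section FiniteDimensionalLaws

lemma bind_map_eq_map_compProd {β γ δ : Type*} [MeasurableSpace β] [MeasurableSpace γ]
    [MeasurableSpace δ] (μ : Measure β) [SFinite μ] (κ : Kernel β γ) [IsSFiniteKernel κ]
    {g : β × γ → δ} (hg : Measurable g) :
    (μ.bind fun b => (κ b).map fun c => g (b, c)) = (μ ⊗ₘ κ).map g := by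
  have h_kernel : (fun b => (κ b).map fun c => g (b, c)) = ⇑((Kernel.id ×ₖ κ).map g) := by
    ext1 b
    rw [Kernel.map_apply _ hg, Kernel.prod_apply, Kernel.id_apply, Measure.dirac_prod,
      Measure.map_map hg measurable_prodMk_left]
    rfl
  rw [h_kernel, ← Measure.map_comp _ _ hg, ← Measure.compProd_eq_comp_prod]

variable (P : Kernel (S × A) S) [IsMarkovKernel P] (R : Kernel (S × A) ℝ) [IsMarkovKernel R]
  (πb : Kernel S A) [IsMarkovKernel πb]

lemma initLaw_eq_compProd (μb : Measure S) [SFinite μb] :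
    initLaw R πb μb = μb ⊗ₘ (πb ⊗ₖ R) := by
  have h_action_reward (s : S) :
      ((πb s).bind fun a => (R (s, a)).map fun r => (s, a, r)) =
        ((πb ⊗ₖ R) s).map fun ar => (s, ar) := by
    rw [Kernel.compProd_apply_eq_compProd_sectR]
    exact bind_map_eq_map_compProd (πb s) (R.sectR s) (g := Prod.mk s) measurable_prodMk_left
  simp_rw [initLaw, h_action_reward]
  exact (bind_map_eq_map_compProd μb (πb ⊗ₖ R) measurable_id).trans Measure.map_id

/-- The conditional law of the step at time `n + 1` given the whole path up to time `n`: `stepLaw`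
at the endpoint of the path, as a kernel that draws the next state from `P`, then the action and
the reward. -/
def pathStepKernel (n : ℕ) : Kernel (Fin (n + 1) → S × A × ℝ) (S × A × ℝ) :=
  P.comap (fun p => ((p (Fin.last n)).1, (p (Fin.last n)).2.1)) (by fun_prop) ⊗ₖ
    (πb ⊗ₖ R).prodMkLeft (Fin (n + 1) → S × A × ℝ)

instance (n : ℕ) : IsMarkovKernel (pathStepKernel P R πb n) := by
  unfold pathStepKernel
  infer_instance

lemma pathStepKernel_apply (n : ℕ) (p : Fin (n + 1) → S × A × ℝ) :
    pathStepKernel P R πb n p = stepLaw P R πb (p (Fin.last n)) := by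
  rw [pathStepKernel, Kernel.compProd_apply_eq_compProd_sectR]
  exact (initLaw_eq_compProd R πb (P ((p (Fin.last n)).1, (p (Fin.last n)).2.1))).symm

lemma measurable_snoc {X : Type*} [MeasurableSpace X] (n : ℕ) :
    Measurable fun q : (Fin n → X) × X => (Fin.snoc q.1 q.2 : Fin (n + 1) → X) := by
  refine measurable_pi_lambda _ fun i => ?_
  cases i using Fin.lastCases <;> simp only [Fin.snoc_last, Fin.snoc_castSucc] <;> fun_prop

lemma finLaw_succ (μb : Measure S) (n : ℕ) [SFinite (finLaw P R πb μb n)] :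
    finLaw P R πb μb (n + 1) =
      (finLaw P R πb μb n ⊗ₘ pathStepKernel P R πb n).map fun q => Fin.snoc q.1 q.2 := by
  rw [← bind_map_eq_map_compProd _ _ (measurable_snoc (n + 1)), finLaw]
  simp_rw [pathStepKernel_apply]

end FiniteDimensionalLaws

section Trajectory

/-- The prefix `(x₀, …, x_n)` of a trajectory. -/
def pathPrefix {X : Type*} (n : ℕ) (ω : ℕ → X) (i : Fin (n + 1)) : X := ω i

@[fun_prop]
lemma measurable_pathPrefix {X : Type*} [MeasurableSpace X] (n : ℕ) :
    Measurable (pathPrefix (X := X) n) := by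
  unfold pathPrefix
  fun_prop

/-- The state-action history `(s₀, a₀, …, s_k, a_k)`, the random variable generating `𝓕_k`. -/
def history (k : ℕ) (ω : ℕ → S × A × ℝ) (i : Fin (k + 1)) : S × A := ((ω i).1, (ω i).2.1)

@[fun_prop]
lemma measurable_history (k : ℕ) : Measurable (history (S := S) (A := A) k) := by
  unfold history
  fun_prop

lemma historySA_eq_comap_history (k : ℕ) :
    historySA k = MeasurableSpace.pi.comap (history (S := S) (A := A) k) := by
  simp_rw [historySA, MeasurableSpace.pi, MeasurableSpace.comap_iSup, MeasurableSpace.comap_comp]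
  rfl

lemma currentSA_eq_comap_history (k : ℕ) :
    currentSA (S := S) (A := A) k =
      MeasurableSpace.comap ((fun h => h (Fin.last k)) ∘ history k) inferInstance :=
  rfl

lemma currentSA_le (k : ℕ) : currentSA (S := S) (A := A) k ≤ MeasurableSpace.pi :=
  Measurable.comap_le (by fun_prop)

lemma historySA_le (k : ℕ) : historySA (S := S) (A := A) k ≤ MeasurableSpace.pi :=
  historySA_eq_comap_history (S := S) (A := A) k ▸ (measurable_history k).comap_le

variable {P : Kernel (S × A) S} {R : Kernel (S × A) ℝ} {πb : Kernel S A} {μb : Measure S}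
  {Pb : Measure (ℕ → S × A × ℝ)}

lemma map_zero_eq_initLaw (hPb : Pb.map (pathPrefix 0) = finLaw P R πb μb 0) :
    Pb.map (fun ω => ω 0) = initLaw R πb μb := by
  calc Pb.map (fun ω => ω 0)
      = (Pb.map (pathPrefix 0)).map (fun p => p 0) :=
        (Measure.map_map (measurable_pi_apply 0) (measurable_pathPrefix 0)).symm
    _ = initLaw R πb μb := by
        rw [hPb, finLaw, Measure.map_map (measurable_pi_apply 0) (by fun_prop)]
        exact Measure.map_id

variable [IsMarkovKernel R] [IsMarkovKernel πb] [IsProbabilityMeasure Pb]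

lemma hasCondDistrib_reward_zero [SFinite μb]
    (hPb : Pb.map (pathPrefix 0) = finLaw P R πb μb 0) :
    HasCondDistrib (fun ω => (ω 0).2.2) (fun ω => ((ω 0).1, (ω 0).2.1)) R Pb := by
  have h_init : HasLaw (fun ω : ℕ → S × A × ℝ => ω 0) (μb ⊗ₘ (πb ⊗ₖ R)) Pb :=
    ⟨(measurable_pi_apply 0).aemeasurable, by rw [map_zero_eq_initLaw hPb, initLaw_eq_compProd]⟩
  exact (hasCondDistrib_of_hasLaw_compProd h_init).of_compProd

variable [IsMarkovKernel P]

lemma hasCondDistrib_path_succ (hPb : ∀ n, Pb.map (pathPrefix n) = finLaw P R πb μb n) (n : ℕ) :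
    HasCondDistrib (fun ω => ω (n + 1)) (pathPrefix n) (pathStepKernel P R πb n) Pb where
  map_eq := by
    have : SFinite (finLaw P R πb μb n) := hPb n ▸ inferInstance
    have h_split : (fun ω : ℕ → S × A × ℝ => (pathPrefix n ω, ω (n + 1))) =
        (fun p => (Fin.init p, p (Fin.last (n + 1)))) ∘ pathPrefix (n + 1) := rfl
    have h_init : Measurable fun p : Fin (n + 2) → S × A × ℝ =>
        ((Fin.init p : Fin (n + 1) → S × A × ℝ), p (Fin.last (n + 1))) := by
      unfold Fin.init
      fun_prop
    rw [h_split, ← Measure.map_map h_init (measurable_pathPrefix _), hPb (n + 1), hPb n,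
      finLaw_succ, Measure.map_map h_init (measurable_snoc _)]
    simp [Function.comp_def]

lemma hasCondDistrib_nextState_path (hPb : ∀ n, Pb.map (pathPrefix n) = finLaw P R πb μb n)
    (n : ℕ) :
    HasCondDistrib (fun ω => (ω (n + 1)).1) (pathPrefix n)
      (P.comap (fun p => ((p (Fin.last n)).1, (p (Fin.last n)).2.1)) (by fun_prop)) Pb := by
  simpa only [pathStepKernel, Kernel.fst_compProd] using (hasCondDistrib_path_succ hPb n).fst

lemma hasCondDistrib_nextState (hPb : ∀ n, Pb.map (pathPrefix n) = finLaw P R πb μb n) (k : ℕ) :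
    HasCondDistrib (fun ω => (ω (k + 1)).1) (fun ω => (history k ω, (ω k).2.2))
      (P.comap (fun q => q.1 (Fin.last k)) (by fun_prop)) Pb :=
  HasCondDistrib.comp_right
    (f := fun p : Fin (k + 1) → S × A × ℝ =>
      ((fun i => ((p i).1, (p i).2.1) : Fin (k + 1) → S × A), (p (Fin.last k)).2.2))
    (hf := by fun_prop) (hasCondDistrib_nextState_path hPb k)

lemma hasCondDistrib_reward_succ (hPb : ∀ n, Pb.map (pathPrefix n) = finLaw P R πb μb n) (n : ℕ) :
    HasCondDistrib (fun ω => (ω (n + 1)).2.2)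
      (fun ω => (history n ω, ((ω (n + 1)).1, (ω (n + 1)).2.1)))
      (R.prodMkLeft (Fin (n + 1) → S × A)) Pb := by
  have h_action_reward : HasCondDistrib (fun ω => ((ω (n + 1)).2.1, (ω (n + 1)).2.2))
      (fun ω => (pathPrefix n ω, (ω (n + 1)).1)) ((πb ⊗ₖ R).prodMkLeft _) Pb :=
    (hasCondDistrib_path_succ hPb n).of_compProd
  rw [prodMkLeft_compProd] at h_action_reward
  exact HasCondDistrib.comp_right (κ := R.prodMkLeft (Fin (n + 1) → S × A))
    (f := fun x : ((Fin (n + 1) → S × A × ℝ) × S) × A =>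
      ((fun i => ((x.1.1 i).1, (x.1.1 i).2.1) : Fin (n + 1) → S × A), (x.1.2, x.2)))
    (hf := by fun_prop) h_action_reward.of_compProd

lemma hasCondDistrib_reward [SFinite μb] (hPb : ∀ n, Pb.map (pathPrefix n) = finLaw P R πb μb n)
    (k : ℕ) :
    HasCondDistrib (fun ω => (ω k).2.2) (history k)
      (R.comap (fun h => h (Fin.last k)) (by fun_prop)) Pb := by
  cases k with
  | zero =>
    have h_history : history 0 = (fun (x : S × A) (_ : Fin 1) => x) ∘
        fun ω : ℕ → S × A × ℝ => ((ω 0).1, (ω 0).2.1) := by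
      ext1 ω
      ext1 i
      rw [Fin.eq_zero i]
      rfl
    rw [h_history]
    exact HasCondDistrib.comp_right (hf := by fun_prop) (hasCondDistrib_reward_zero (hPb 0))
  | succ n =>
    have h_comap : R.prodMkLeft (Fin (n + 1) → S × A) =
        (R.comap (fun h => h (Fin.last (n + 1))) (by fun_prop)).comap _
          (measurable_snoc (n + 1)) := by
      ext1 x
      simp only [Kernel.prodMkLeft_apply, Kernel.comap_apply, Fin.snoc_last]
    have h_history : history (n + 1) = (fun q => Fin.snoc q.1 q.2) ∘
        fun ω : ℕ → S × A × ℝ => (history n ω, ((ω (n + 1)).1, (ω (n + 1)).2.1)) := by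
      ext1 ω
      exact (Fin.snoc_init_self (history (n + 1) ω)).symm
    have h := hasCondDistrib_reward_succ hPb n
    rw [h_comap] at h
    rw [h_history]
    exact h.comp_right

lemma hasCondDistrib_transition [SFinite μb]
    (hPb : ∀ n, Pb.map (pathPrefix n) = finLaw P R πb μb n) (k : ℕ) :
    HasCondDistrib (fun ω => ((ω k).2.2, (ω (k + 1)).1)) (history k)
      ((R ×ₖ P).comap (fun h => h (Fin.last k)) (by fun_prop)) Pb := by
  have h := hasCondDistrib_prodMk (hasCondDistrib_reward hPb k) (hasCondDistrib_nextState hPb k)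
  convert h using 1
  ext1 h
  rw [Kernel.comap_apply, Kernel.prod_apply, Kernel.compProd_apply_eq_compProd_sectR]
  exact (Measure.compProd_const).symm

lemma condVar_historySA_ae_eq_condVar_currentSA [SFinite μb]
    (hPb : ∀ n, Pb.map (pathPrefix n) = finLaw P R πb μb n) (k : ℕ)
    {f : S × A × ℝ × S → ℝ} (hf : Measurable f) (hf_memLp : MemLp (fun ω => f (Xt k ω)) 2 Pb) :
    Var[fun ω => f (Xt k ω); Pb | historySA k] =ᵐ[Pb]
      Var[fun ω => f (Xt k ω); Pb | currentSA k] := by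
  rw [historySA_eq_comap_history, currentSA_eq_comap_history]
  exact condVar_comap_ae_eq_of_hasCondDistrib (measurable_history k)
    (hasCondDistrib_transition hPb k) (f := fun p => f (p.1.1, p.1.2, p.2.1, p.2.2))
    (by fun_prop) hf_memLp

theorem markov_vs_nonmarkov_efficiency_term_general [SFinite μb]
    (hPb : ∀ n, Pb.map (pathPrefix n) = finLaw P R πb μb n) (k : ℕ)
    {f : S × A × ℝ × S → ℝ} (hf : Measurable f) (hf_memLp : MemLp (fun ω => f (Xt k ω)) 2 Pb)
    {ν μ : (ℕ → S × A × ℝ) → ℝ} (hν : Integrable ν Pb)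
    (hνV : Integrable (fun ω => ν ω ^ 2 * condVar (historySA k) Pb (fun ω => f (Xt k ω)) ω) Pb)
    (hμ : μ =ᵐ[Pb] Pb[ν | currentSA k]) :
    ∫ ω, μ ω ^ 2 * condVar (currentSA k) Pb (fun ω => f (Xt k ω)) ω ∂Pb ≤
      ∫ ω, ν ω ^ 2 * condVar (historySA k) Pb (fun ω => f (Xt k ω)) ω ∂Pb := by
  let V := condVar (currentSA k) Pb fun ω => f (Xt k ω)
  have h_weight : (fun ω => ν ω ^ 2 * condVar (historySA k) Pb (fun ω => f (Xt k ω)) ω) =ᵐ[Pb]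
      fun ω => ν ω ^ 2 * V ω :=
    (condVar_historySA_ae_eq_condVar_currentSA hPb k hf hf_memLp).mono fun ω hω =>
      congrArg (ν ω ^ 2 * ·) hω
  calc ∫ ω, μ ω ^ 2 * V ω ∂Pb
      = ∫ ω, (Pb[ν | currentSA k]) ω ^ 2 * V ω ∂Pb :=
        integral_congr_ae (hμ.mono fun ω hω => congrArg (· ^ 2 * V ω) hω)
    _ ≤ ∫ ω, ν ω ^ 2 * V ω ∂Pb :=
        integral_sq_condExp_mul_le (currentSA_le k) hν stronglyMeasurable_condVar
          (condVar_nonneg _) (hνV.congr h_weight)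
    _ = ∫ ω, ν ω ^ 2 * condVar (historySA k) Pb (fun ω => f (Xt k ω)) ω ∂Pb :=
        (integral_congr_ae h_weight).symm

end Trajectory

section Boundedness

/-- The cumulative density ratio `ν_k = ∏_{j ≤ k} η(s_j, a_j)`. -/
def cumulativeRatio (η : S → A → ℝ) (k : ℕ) (ω : ℕ → S × A × ℝ) : ℝ :=
  ∏ j ∈ Finset.range (k + 1), η (ω j).1 (ω j).2.1

lemma measurable_cumulativeRatio {η : S → A → ℝ} (hη : Measurable (Function.uncurry η)) (k : ℕ) :
    Measurable (cumulativeRatio η k) :=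
  Finset.measurable_prod _ fun j _ =>
    hη.comp (f := fun ω : ℕ → S × A × ℝ => ((ω j).1, (ω j).2.1)) (by fun_prop)

variable {Pb : Measure (ℕ → S × A × ℝ)} [IsFiniteMeasure Pb]

lemma memLp_cumulativeRatio {η : S → A → ℝ} (hη : Measurable (Function.uncurry η)) {C : ℝ}
    (hC : ∀ s a, |η s a| ≤ C) (k : ℕ) (p : ℝ≥0∞) : MemLp (cumulativeRatio η k) p Pb := by
  refine .of_bound (measurable_cumulativeRatio hη k).aestronglyMeasurable (C ^ (k + 1))
    (ae_of_all _ fun ω => ?_)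
  calc ‖cumulativeRatio η k ω‖
      = ∏ j ∈ Finset.range (k + 1), |η (ω j).1 (ω j).2.1| := Finset.abs_prod _ _
    _ ≤ ∏ _j ∈ Finset.range (k + 1), C :=
        Finset.prod_le_prod (fun _ _ => abs_nonneg _) fun _ _ => hC _ _
    _ = C ^ (k + 1) := by rw [Finset.prod_const, Finset.card_range]

lemma memLp_comp_Xt {f : S × A × ℝ × S → ℝ} (hf : Measurable f) {C : ℝ} (hC : ∀ x, |f x| ≤ C)
    (k : ℕ) (p : ℝ≥0∞) : MemLp (fun ω => f (Xt k ω)) p Pb := by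
  have hXt : Measurable (Xt (S := S) (A := A) k) := by
    unfold Xt
    fun_prop
  exact .of_bound (hf.comp hXt).aestronglyMeasurable C (ae_of_all _ fun ω => hC (Xt k ω))

end Boundedness

/-- term-by-term comparison of the Markov and non-Markov efficiency
bounds: `E[μ_k² Var(Z | σ(s_k,a_k))] ≤ E[ν_k² Var(Z | σ(s₀,a₀,…,s_k,a_k))]`. -/
theorem markov_vs_nonmarkov_efficiency_term
    (P : Kernel (S × A) S) [IsMarkovKernel P]
    (Rmax : ℝ) (hRmax : 0 < Rmax)
    (R : Kernel (S × A) ℝ) [IsMarkovKernel R]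
    (hR : ∀ p : S × A, R p (Set.Icc (0 : ℝ) Rmax)ᶜ = 0)
    (γ : ℝ) (hγ0 : 0 < γ) (hγ1 : γ < 1)
    (πe πb : Kernel S A) [IsMarkovKernel πe] [IsMarkovKernel πb]
    (μe μb : Measure S) [IsProbabilityMeasure μe] [IsProbabilityMeasure μb]
    -- the policy density ratio η, bounded
    (η : S → A → ℝ) (hη_meas : Measurable (Function.uncurry η))
    (hη_bdd : ∃ C : ℝ, ∀ s a, 0 ≤ η s a ∧ η s a ≤ C)
    (hη : ∀ᵐ s ∂μb, πe s = (πb s).withDensity fun a => ENNReal.ofReal (η s a))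
    -- the trajectory law P_b, characterized by its finite-dimensional prefixes
    (Pb : Measure (ℕ → S × A × ℝ)) [IsProbabilityMeasure Pb]
    (hPb : ∀ n : ℕ, Pb.map (fun ω => fun i : Fin (n + 1) => ω i) = finLaw P R πb μb n)
    -- a fixed time k, and a bounded measurable function f of one transition
    (k : ℕ)
    (f : S × A × ℝ × S → ℝ) (hf_meas : Measurable f) (hf_bdd : ∃ C : ℝ, ∀ x, |f x| ≤ C)
    -- Z, the cumulative density ratio ν_k and the marginal density ratio μ_k
    (Z : (ℕ → S × A × ℝ) → ℝ) (hZ : ∀ ω, Z ω = f (Xt k ω))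
    (ν : (ℕ → S × A × ℝ) → ℝ)
    (hν : ∀ ω, ν ω = ∏ j ∈ Finset.range (k + 1), η (ω j).1 (ω j).2.1)
    (μ : (ℕ → S × A × ℝ) → ℝ)
    (hμ : μ =ᵐ[Pb] Pb[ν | currentSA (S := S) (A := A) k]) :
    ∫ ω, (μ ω) ^ 2 * condVar (currentSA (S := S) (A := A) k) Pb Z ω ∂Pb ≤
      ∫ ω, (ν ω) ^ 2 * condVar (historySA (S := S) (A := A) k) Pb Z ω ∂Pb := by
  obtain rfl : Z = fun ω => f (Xt k ω) := funext hZ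
  obtain rfl : ν = cumulativeRatio η k := funext hν
  obtain ⟨C, hC⟩ := hη_bdd
  obtain ⟨B, hB⟩ := hf_bdd
  have hν_memLp (p : ℝ≥0∞) : MemLp (cumulativeRatio η k) p Pb :=
    memLp_cumulativeRatio hη_meas (fun s a => (abs_of_nonneg (hC s a).1).trans_le (hC s a).2) k p
  have hZ_memLp : MemLp (fun ω => f (Xt k ω)) 2 Pb := memLp_comp_Xt hf_meas hB k 2
  have hνV := integrable_mul_condVar_of_abs_le (historySA_le k) (hν_memLp 2).integrable_sq
    hZ_memLp.1 (ae_of_all _ fun ω => hB (Xt k ω))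
  exact markov_vs_nonmarkov_efficiency_term_general hPb k hf_meas hZ_memLp
    ((hν_memLp 1).integrable le_rfl) hνV hμ

end
end
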